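/- Equivalence under permutations: suppose (ε₁,…,ε_n) ∈ {0,1}^n is a permutation of (ε'₁,…,ε'_n), and let 𝒲 and 𝒲' be the corresponding tensor-product spaces. Then there is an invertible linear map Φ : 𝒲⊗𝒲 → 𝒲'⊗𝒲', with matrix entries in ℂ(q) and independent of z, such that Φ ∘ S₀(z | ε₁,…,ε_n) = S₀(z | ε'₁,…,ε'_n) ∘ Φ and Φ ∘ S₀^{s,t}(z | ε₁,…,ε_n) = S₀^{s,t}(z | ε'₁,…,ε'_n) ∘ Φ for all s,t ∈ {1,2}, as identities of maps whose entries are formal power series in z. -/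

import Mathlib

/-!
The coefficient of `z^c` in either solution is built from the operators `⟨c| S^(ε₁) ⋯ S^(ε_n) |k⟩`
obtained by composing the 3D operators along a common auxiliary Fock space and taking a matrix
element there. It is therefore enough to find an invertible `f` on `𝒲 ⊗ 𝒲`, acting trivially on the
auxiliary space, with `f ∘ ⟨c| S^(ε₁) ⋯ S^(ε_n) |k⟩ = ⟨c| S^(ε'₁) ⋯ S^(ε'_n) |k⟩ ∘ f` for all `c`
and `k`: such an `f` commutes with taking the trace and with pairing against the boundary vectors.
Since adjacent transpositions generate all permutations, and transpositions of equal `ε`s are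
trivial, the case of a neighbouring pair `(1, 0)` suffices.

For that pair `f` is `Tr₁(L₁₂₄ L₁₃₅)`, the trace being over a two-dimensional space (`exch`); it is
block diagonal with blocks of size at most two, and the numbers `1 + q^m` and `1 - q^(m+1)` which
occur in its inverse (`exchInv`) are nonzero because `q` is not a root of unity. That `f` exchanges
`L` and `R` (`hat_exch_siteOp`) is a form of the tetrahedron equation. Expanding `f` and `L` by their
two-dimensional labels reduces it to linear relations between the vectors `X (R|i,j,k⟩)` with `X`
among the operators `k₁k₂`, `k₂k₃`, `k₂a₃^±`, `k₁a₃⁺ + k₃a₁⁻a₂⁺`, … on the triple Fock space,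
that is, to commutation relations of `R` with elements of a `q`-oscillator algebra. They are proved
by induction on `i` and `j`: two of them, `R a₁⁺ k₂ = V R` and `R a₂⁺ = U R`, express a column of `R`
through the preceding ones, and the others propagate along these by relations between `X`, `U`
and `V` which are checked on basis vectors.

Rows `[(i₁,j₁), …, (i_n,j_n)]` of labels are encoded as lists, so that exchanges of neighbours act by
recursion on lists. The exclusion rule `m_t ≤ 1` for `ε_t = 1` is imposed afterwards, on the subspace
`okRows` which `f` respects, and only then are scalars extended to Laurent series.
-/

open scoped BigOperators

set_option synthInstance.maxHeartbeats 1000000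
set_option maxHeartbeats 1000000

noncomputable section

namespace TetraGQ

/-! ## Scalar ingredients -/

/-- `(a;qb)_m = ∏_{k=0}^{m-1} (1 - a qb^k)`. -/
def poch (qb a : ℂ) (m : ℕ) : ℂ := ∏ k ∈ Finset.range m, (1 - a * qb ^ k)

/-- The `q`-binomial `binom(m,k)_qb`, zero unless `k ≤ m`. -/
def qbinom (qb : ℂ) (m k : ℕ) : ℂ :=
  if k ≤ m then poch qb qb m / (poch qb qb k * poch qb qb (m - k)) else 0

/-- `[m] = (q^m - q^{-m})/(q - q^{-1})`. -/
def qnum (q : ℂ) (m : ℕ) : ℂ := (q ^ m - q⁻¹ ^ m) / (q - q⁻¹)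

/-- `[m]! = ∏_{k=1}^m [k]`. -/
def qfac (q : ℂ) (m : ℕ) : ℂ := ∏ k ∈ Finset.range m, qnum q (k + 1)

/-- The symmetric `q`-binomial `[m choose k]`, zero unless `k ≤ m`. -/
def qbin (q : ℂ) (m k : ℕ) : ℂ :=
  if k ≤ m then qfac q m / (qfac q k * qfac q (m - k)) else 0

/-- The 3D `R` matrix entry `R^{a,b,c}_{i,j,k}`. -/
def R3 (q : ℂ) (a b c i j k : ℕ) : ℂ :=
  (if a + b = i + j ∧ b + c = j + k then (1 : ℂ) else 0) *
    ∑ lam ∈ Finset.range (b + 1),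
      (-1 : ℂ) ^ lam *
        q ^ ((i : ℤ) * ((c : ℤ) - (j : ℤ)) + ((k : ℤ) + 1) * (lam : ℤ) +
            ((b : ℤ) - (lam : ℤ)) * ((b : ℤ) - (lam : ℤ) - (k : ℤ))) *
        (poch (q ^ 2) (q ^ 2) (c + (b - lam)) / poch (q ^ 2) (q ^ 2) c) *
        qbinom (q ^ 2) i (b - lam) * qbinom (q ^ 2) j lam

/-- The 3D `L` matrix entry `L^{a,b,c}_{i,j,k}`. -/
def L3 (q : ℂ) (a b c i j k : ℕ) : ℂ :=
  if a = 0 ∧ b = 0 ∧ i = 0 ∧ j = 0 ∧ c = k then 1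
  else if a = 1 ∧ b = 1 ∧ i = 1 ∧ j = 1 ∧ c = k then 1
  else if a = 0 ∧ b = 1 ∧ i = 0 ∧ j = 1 ∧ c = k then -q ^ (k + 1)
  else if a = 1 ∧ b = 0 ∧ i = 1 ∧ j = 0 ∧ c = k then q ^ k
  else if a = 0 ∧ b = 1 ∧ i = 1 ∧ j = 0 ∧ c + 1 = k then 1 - q ^ (2 * k)
  else if a = 1 ∧ b = 0 ∧ i = 0 ∧ j = 1 ∧ c = k + 1 then 1
  else 0

/-- `S^(0) = R`, `S^(1) = L`. -/
def Sg (q : ℂ) (e : Bool) (a b c i j k : ℕ) : ℂ :=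
  if e then L3 q a b c i j k else R3 q a b c i j k

/-- Coefficient of `z^{c0}` in the trace solution matrix element
`S₀(z)^{a,b}_{i,j}`. -/
def trCoef (q : ℂ) {n : ℕ} [NeZero n] (ε : Fin n → Bool) (a b i j : Fin n → ℕ)
    (c0 : ℕ) : ℂ :=
  ∑ᶠ c : Fin n → ℕ,
    if c 0 = c0 then
      ∏ t : Fin n, Sg q (ε t) (a t) (b t) (c t) (i t) (j t) (c (t + 1))
    else 0

/-- Coefficient of `z^{c0}` in the boundary solution matrix element
`S₀^{1,1}(z)^{a,b}_{i,j}`. -/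
def bdCoef (q : ℂ) {n : ℕ} (ε : Fin n → Bool) (a b i j : Fin n → ℕ) (c0 : ℕ) : ℂ :=
  ∑ᶠ c : Fin (n + 1) → ℕ,
    if c 0 = c0 then
      poch (q ^ 2) (q ^ 2) c0 / (poch q q c0 * poch q q (c (Fin.last n))) *
        ∏ t : Fin n, Sg q (ε t) (a t) (b t) (c t.castSucc) (i t) (j t) (c t.succ)
    else 0

/-- Coefficient of `z^{c0}` in the boundary solution matrix element
`S₀^{s,t}(z)^{a,b}_{i,j}`. -/
def bdCoefST (q : ℂ) (s t : ℕ) {n : ℕ} (ε : Fin n → Bool) (a b i j : Fin n → ℕ)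
    (c0 : ℕ) : ℂ :=
  ∑ᶠ c : Fin (n + 1) → ℕ,
    if c 0 = c0 then
      poch (q ^ 2) (q ^ 2) (s * c0) /
          (poch (q ^ s ^ 2) (q ^ s ^ 2) c0 * poch (q ^ t ^ 2) (q ^ t ^ 2) (c (Fin.last n))) *
        ∏ u : Fin n,
          Sg q (ε u) (a u) (b u)
            (if u.castSucc = 0 then s * c0 else c u.castSucc) (i u) (j u)
            (if u.succ = Fin.last n then t * c (Fin.last n) else c u.succ)
    else 0

/-! ## The spaces `𝒲` and `𝒲⊗𝒲` -/

/-- `m` is an admissible occupation vector: at positions with `ε = 1` the entry is `≤ 1`. -/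
def Ok {n : ℕ} (ε : Fin n → Bool) (m : Fin n → ℕ) : Prop := ∀ t, ε t = true → m t ≤ 1

instance {n : ℕ} (ε : Fin n → Bool) : DecidablePred (Ok ε) := fun m =>
  decidable_of_iff (∀ t, ε t = true → m t ≤ 1) Iff.rfl

/-- Basis labels of `𝒲`. -/
def Idx {n : ℕ} (ε : Fin n → Bool) : Type := {m : Fin n → ℕ // Ok ε m}

/-- The space `𝒲` with basis `|m⟩`, over the field `L`. -/
abbrev W (L : Type) [Field L] {n : ℕ} (ε : Fin n → Bool) : Type := Idx ε →₀ L

/-- The space `𝒲 ⊗ 𝒲` with basis `|a⟩⊗|b⟩`, over the field `L`. -/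
abbrev WW (L : Type) [Field L] {n : ℕ} (ε : Fin n → Bool) : Type := (Idx ε × Idx ε) →₀ L

/-- The ket `|m⟩ ∈ 𝒲`; it is `0` if any coordinate is out of range. -/
def ket (L : Type) [Field L] {n : ℕ} (ε : Fin n → Bool) (m : Fin n → ℤ) : W L ε :=
  if h : (∀ t, 0 ≤ m t) ∧ Ok ε (fun t => (m t).toNat) then
    Finsupp.single ⟨fun t => (m t).toNat, h.2⟩ 1
  else 0

/-- The ket `|a⟩⊗|b⟩ ∈ 𝒲⊗𝒲`; it is `0` if any coordinate is out of range. -/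
def kk (L : Type) [Field L] {n : ℕ} (ε : Fin n → Bool) (a b : Fin n → ℤ) : WW L ε :=
  if h : ((∀ t, 0 ≤ a t) ∧ Ok ε (fun t => (a t).toNat)) ∧
      ((∀ t, 0 ≤ b t) ∧ Ok ε (fun t => (b t).toNat)) then
    Finsupp.single (⟨fun t => (a t).toNat, h.1.2⟩, ⟨fun t => (b t).toNat, h.2.2⟩) 1
  else 0

/-- The linear endomorphism of a free module determined by images of basis vectors. -/
def mkEnd (L : Type) [Field L] {α : Type} (v : α → (α →₀ L)) :
    (α →₀ L) →ₗ[L] (α →₀ L) :=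
  Finsupp.lsum L fun m => LinearMap.toSpanSingleton L (α →₀ L) (v m)

/-- Product of vectors of `𝒲`, landing in `𝒲⊗𝒲`. -/
def tens (L : Type) [Field L] {n : ℕ} {ε : Fin n → Bool} (u v : W L ε) : WW L ε :=
  u.sum fun a ca => v.sum fun b cb => Finsupp.single (a, b) (ca * cb)

/-- The operator `A ⊗ B` on `𝒲⊗𝒲`. -/
def opT (L : Type) [Field L] {n : ℕ} {ε : Fin n → Bool}
    (A B : W L ε →ₗ[L] W L ε) : WW L ε →ₗ[L] WW L ε :=
  mkEnd L fun mm => tens L (A (Finsupp.single mm.1 1)) (B (Finsupp.single mm.2 1))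

/-- The subspace `𝒲_l ⊗ 𝒲_m` of `𝒲⊗𝒲`. -/
def WWlm (L : Type) [Field L] {n : ℕ} (ε : Fin n → Bool) (l m : ℕ) :
    Submodule L (WW L ε) :=
  Submodule.span L {v | ∃ p : Idx ε × Idx ε,
    (∑ t, p.1.1 t) = l ∧ (∑ t, p.2.1 t) = m ∧ v = Finsupp.single p 1}

/-- The subspace `𝒲_l` of `𝒲`. -/
def Wl (L : Type) [Field L] {n : ℕ} (ε : Fin n → Bool) (l : ℕ) : Submodule L (W L ε) :=
  Submodule.span L {v | ∃ p : Idx ε, (∑ t, p.1 t) = l ∧ v = Finsupp.single p 1}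

/-! ## The scalar field of formal Laurent series in `z` over `ℂ` -/

abbrev K : Type := LaurentSeries ℂ

/-- The power series `Σ_{c≥0} f(c) z^c` as an element of `K`. -/
def mkS (f : ℕ → ℂ) : K := HahnSeries.ofPowerSeries ℤ ℂ (PowerSeries.mk f)

/-- Constants `ℂ → K`. -/
def cK : ℂ →+* K := HahnSeries.C

/-- The variable `z ∈ K`. -/
def zK : K := mkS fun c => if c = 1 then 1 else 0

/-! ## The solutions of the Yang-Baxter equation -/

/-- The unnormalized trace solution `S₀(z)` acting on `𝒲⊗𝒲`. -/
def S0tr (q : ℂ) {n : ℕ} [NeZero n] (ε : Fin n → Bool) : WW K ε →ₗ[K] WW K ε :=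
  mkEnd K fun ij =>
    ∑ a ∈ Fintype.piFinset (fun t => Finset.range (ij.1.1 t + ij.2.1 t + 1)),
      mkS (trCoef q ε a (fun t => ij.1.1 t + ij.2.1 t - a t) ij.1.1 ij.2.1) •
        kk K ε (fun t => (a t : ℤ)) (fun t => (ij.1.1 t : ℤ) + (ij.2.1 t : ℤ) - (a t : ℤ))

/-- The unnormalized boundary solution `S₀^{1,1}(z)` acting on `𝒲⊗𝒲`. -/
def S0bd (q : ℂ) {n : ℕ} (ε : Fin n → Bool) : WW K ε →ₗ[K] WW K ε :=
  mkEnd K fun ij =>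
    ∑ a ∈ Fintype.piFinset (fun t => Finset.range (ij.1.1 t + ij.2.1 t + 1)),
      mkS (bdCoef q ε a (fun t => ij.1.1 t + ij.2.1 t - a t) ij.1.1 ij.2.1) •
        kk K ε (fun t => (a t : ℤ)) (fun t => (ij.1.1 t : ℤ) + (ij.2.1 t : ℤ) - (a t : ℤ))

/-- The unnormalized boundary solution `S₀^{s,t}(z)` acting on `𝒲⊗𝒲`. -/
def S0bdST (q : ℂ) (s t : ℕ) {n : ℕ} (ε : Fin n → Bool) : WW K ε →ₗ[K] WW K ε :=
  mkEnd K fun ij =>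
    ∑ a ∈ Fintype.piFinset (fun u => Finset.range (ij.1.1 u + ij.2.1 u + 1)),
      mkS (bdCoefST q s t ε a (fun u => ij.1.1 u + ij.2.1 u - a u) ij.1.1 ij.2.1) •
        kk K ε (fun u => (a u : ℤ)) (fun u => (ij.1.1 u : ℤ) + (ij.2.1 u : ℤ) - (a u : ℤ))

/-- The diagonal gauge operator; `Kdiag pc ε s |m⟩ = pc^{s·(m₁+⋯+m_n)} |m⟩`
(`s = -1` gives `K`, `s = 1` gives `K⁻¹`). -/
def Kdiag (pc : ℂ) {n : ℕ} (ε : Fin n → Bool) (s : ℤ) : W K ε →ₗ[K] W K ε :=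
  mkEnd K fun m => cK (pc ^ (s * ∑ t, (m.1 t : ℤ))) • Finsupp.single m 1

/-- The gauge transformed boundary solution `S̃₀^{1,1}(z) = (K⊗1) S₀^{1,1}(z) (1⊗K⁻¹)`. -/
def S0bdT (q pc : ℂ) {n : ℕ} (ε : Fin n → Bool) : WW K ε →ₗ[K] WW K ε :=
  opT K (Kdiag pc ε (-1)) LinearMap.id ∘ₗ S0bd q ε ∘ₗ opT K LinearMap.id (Kdiag pc ε 1)

/-! ## The generalized quantum group actions -/

/-- Value of an occupation vector at a natural-number position. -/
def av {n : ℕ} (m : Fin n → ℕ) (p : ℕ) : ℕ := if h : p < n then m ⟨p, h⟩ else 0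

/-- Unit coordinate vector at a natural-number position. -/
def dlt {n : ℕ} (p : ℕ) : Fin n → ℤ := fun t => if (t : ℕ) = p then 1 else 0

/-- `q_i = q` if `ε_i = 0` and `-q⁻¹` if `ε_i = 1` (0-based positions). -/
def qc (q : ℂ) {n : ℕ} (ε : Fin n → Bool) (p : ℕ) : ℂ :=
  if h : p < n then (if ε ⟨p, h⟩ then -q⁻¹ else q) else q

/-- Type A generator `e_r` of the action `π_x`. -/
def eA (q : ℂ) {L : Type} [Field L] (ι : ℂ →+* L) {n : ℕ} (ε : Fin n → Bool) (x : L)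
    (r : Fin n) : W L ε →ₗ[L] W L ε :=
  mkEnd L fun m =>
    (x ^ (if (r : ℕ) = 0 then 1 else 0) * ι (qnum q (av m.1 (((r : ℕ) + n - 1) % n)))) •
      ket L ε fun t => (m.1 t : ℤ) - dlt (((r : ℕ) + n - 1) % n) t + dlt (r : ℕ) t

/-- Type A generator `f_r` of the action `π_x`. -/
def fA (q : ℂ) {L : Type} [Field L] (ι : ℂ →+* L) {n : ℕ} (ε : Fin n → Bool) (x : L)
    (r : Fin n) : W L ε →ₗ[L] W L ε :=
  mkEnd L fun m =>
    (x ^ (if (r : ℕ) = 0 then (-1 : ℤ) else 0) * ι (qnum q (av m.1 (r : ℕ)))) •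
      ket L ε fun t => (m.1 t : ℤ) + dlt (((r : ℕ) + n - 1) % n) t - dlt (r : ℕ) t

/-- Type A generator `k_r^{s}` (`s = ±1`) of the action `π_x`. -/
def kA (q : ℂ) {L : Type} [Field L] (ι : ℂ →+* L) {n : ℕ} (ε : Fin n → Bool) (s : ℤ)
    (r : Fin n) : W L ε →ₗ[L] W L ε :=
  mkEnd L fun m =>
    ι ((qc q ε (((r : ℕ) + n - 1) % n) ^ (-(av m.1 (((r : ℕ) + n - 1) % n) : ℤ)) *
        qc q ε (r : ℕ) ^ (av m.1 (r : ℕ) : ℤ)) ^ s) • Finsupp.single m 1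

/-- Type B generator `e_r` of the action `π_x`. -/
def eB (q : ℂ) {L : Type} [Field L] (ι : ℂ →+* L) {n : ℕ} (ε : Fin n → Bool) (x : L)
    (r : Fin (n + 1)) : W L ε →ₗ[L] W L ε :=
  mkEnd L fun m =>
    if (r : ℕ) = 0 then x • ket L ε (fun t => (m.1 t : ℤ) + dlt 0 t)
    else if (r : ℕ) = n then
      ι (qnum q (av m.1 (n - 1))) • ket L ε (fun t => (m.1 t : ℤ) - dlt (n - 1) t)
    else
      ι (qnum q (av m.1 ((r : ℕ) - 1))) •
        ket L ε (fun t => (m.1 t : ℤ) - dlt ((r : ℕ) - 1) t + dlt (r : ℕ) t)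

/-- Type B generator `f_r` of the action `π_x`. -/
def fB (q : ℂ) {L : Type} [Field L] (ι : ℂ →+* L) {n : ℕ} (ε : Fin n → Bool) (x : L)
    (r : Fin (n + 1)) : W L ε →ₗ[L] W L ε :=
  mkEnd L fun m =>
    if (r : ℕ) = 0 then
      (x⁻¹ * ι (qnum q (av m.1 0))) • ket L ε (fun t => (m.1 t : ℤ) - dlt 0 t)
    else if (r : ℕ) = n then ket L ε (fun t => (m.1 t : ℤ) + dlt (n - 1) t)
    else
      ι (qnum q (av m.1 (r : ℕ))) •
        ket L ε (fun t => (m.1 t : ℤ) + dlt ((r : ℕ) - 1) t - dlt (r : ℕ) t)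

/-- Type B generator `k_r^{s}` (`s = ±1`) of the action `π_x`; `pc = i q^{-1/2}`. -/
def kB (q pc : ℂ) {L : Type} [Field L] (ι : ℂ →+* L) {n : ℕ} (ε : Fin n → Bool) (s : ℤ)
    (r : Fin (n + 1)) : W L ε →ₗ[L] W L ε :=
  mkEnd L fun m =>
    ι ((if (r : ℕ) = 0 then pc⁻¹ * qc q ε 0 ^ (av m.1 0 : ℤ)
        else if (r : ℕ) = n then pc * qc q ε (n - 1) ^ (-(av m.1 (n - 1) : ℤ))
        else qc q ε ((r : ℕ) - 1) ^ (-(av m.1 ((r : ℕ) - 1) : ℤ)) *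
          qc q ε (r : ℕ) ^ (av m.1 (r : ℕ) : ℤ)) ^ s) • Finsupp.single m 1

/-! ## Coproduct actions on `𝒲⊗𝒲` (type A) -/

/-- `Δ(e_r) = 1⊗e_r + e_r⊗k_r`, with `π_x` on the first factor, `π_y` on the second. -/
def dE (q : ℂ) {L : Type} [Field L] (ι : ℂ →+* L) {n : ℕ} (ε : Fin n → Bool) (x y : L)
    (r : Fin n) : WW L ε →ₗ[L] WW L ε :=
  opT L LinearMap.id (eA q ι ε y r) + opT L (eA q ι ε x r) (kA q ι ε 1 r)

/-- `Δ'(e_r) = e_r⊗1 + k_r⊗e_r`. -/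
def dE' (q : ℂ) {L : Type} [Field L] (ι : ℂ →+* L) {n : ℕ} (ε : Fin n → Bool) (x y : L)
    (r : Fin n) : WW L ε →ₗ[L] WW L ε :=
  opT L (eA q ι ε x r) LinearMap.id + opT L (kA q ι ε 1 r) (eA q ι ε y r)

/-- `Δ(f_r) = f_r⊗1 + k_r⁻¹⊗f_r`. -/
def dF (q : ℂ) {L : Type} [Field L] (ι : ℂ →+* L) {n : ℕ} (ε : Fin n → Bool) (x y : L)
    (r : Fin n) : WW L ε →ₗ[L] WW L ε :=
  opT L (fA q ι ε x r) LinearMap.id + opT L (kA q ι ε (-1) r) (fA q ι ε y r)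

/-- `Δ'(f_r) = 1⊗f_r + f_r⊗k_r⁻¹`. -/
def dF' (q : ℂ) {L : Type} [Field L] (ι : ℂ →+* L) {n : ℕ} (ε : Fin n → Bool) (x y : L)
    (r : Fin n) : WW L ε →ₗ[L] WW L ε :=
  opT L LinearMap.id (fA q ι ε y r) + opT L (fA q ι ε x r) (kA q ι ε (-1) r)

/-- `Δ(k_r^s) = Δ'(k_r^s) = k_r^s ⊗ k_r^s`. -/
def dK (q : ℂ) {L : Type} [Field L] (ι : ℂ →+* L) {n : ℕ} (ε : Fin n → Bool) (s : ℤ)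
    (r : Fin n) : WW L ε →ₗ[L] WW L ε :=
  opT L (kA q ι ε s r) (kA q ι ε s r)

/-! ## Coproduct actions on `𝒲⊗𝒲` (type B) -/

def dEB (q pc : ℂ) {L : Type} [Field L] (ι : ℂ →+* L) {n : ℕ} (ε : Fin n → Bool) (x y : L)
    (r : Fin (n + 1)) : WW L ε →ₗ[L] WW L ε :=
  opT L LinearMap.id (eB q ι ε y r) + opT L (eB q ι ε x r) (kB q pc ι ε 1 r)

def dEB' (q pc : ℂ) {L : Type} [Field L] (ι : ℂ →+* L) {n : ℕ} (ε : Fin n → Bool) (x y : L)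
    (r : Fin (n + 1)) : WW L ε →ₗ[L] WW L ε :=
  opT L (eB q ι ε x r) LinearMap.id + opT L (kB q pc ι ε 1 r) (eB q ι ε y r)

def dFB (q pc : ℂ) {L : Type} [Field L] (ι : ℂ →+* L) {n : ℕ} (ε : Fin n → Bool) (x y : L)
    (r : Fin (n + 1)) : WW L ε →ₗ[L] WW L ε :=
  opT L (fB q ι ε x r) LinearMap.id + opT L (kB q pc ι ε (-1) r) (fB q ι ε y r)

def dFB' (q pc : ℂ) {L : Type} [Field L] (ι : ℂ →+* L) {n : ℕ} (ε : Fin n → Bool) (x y : L)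
    (r : Fin (n + 1)) : WW L ε →ₗ[L] WW L ε :=
  opT L LinearMap.id (fB q ι ε y r) + opT L (fB q ι ε x r) (kB q pc ι ε (-1) r)

def dKB (q pc : ℂ) {L : Type} [Field L] (ι : ℂ →+* L) {n : ℕ} (ε : Fin n → Bool) (s : ℤ)
    (r : Fin (n + 1)) : WW L ε →ₗ[L] WW L ε :=
  opT L (kB q pc ι ε s r) (kB q pc ι ε s r)

/-! ## Structure constants -/

/-- Type A structure constant `D_{i,j}` (as a product over 0-based positions). -/
def DA (q : ℂ) {n : ℕ} (ε : Fin n → Bool) (i j : Fin n) : ℂ :=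
  ∏ p ∈ (({((i : ℕ) + n - 1) % n, (i : ℕ)} : Finset ℕ) ∩
      ({((j : ℕ) + n - 1) % n, (j : ℕ)} : Finset ℕ)),
    qc q ε p ^ (if i = j then (1 : ℤ) else -1)

/-- The set `⟨i⟩ = {i, i+1} ∩ [1,n]` of type B, translated to 0-based positions. -/
def nodeB (n i : ℕ) : Finset ℕ :=
  if i = 0 then {0} else if i = n then {n - 1} else {i - 1, i}

/-- Type B structure constant `D_{i,j}`. -/
def DB (q : ℂ) {n : ℕ} (ε : Fin n → Bool) (i j : Fin (n + 1)) : ℂ :=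
  ∏ p ∈ nodeB n (i : ℕ) ∩ nodeB n (j : ℕ), qc q ε p ^ (if i = j then (1 : ℤ) else -1)

/-! ## Distinguished vectors -/

/-- The vector `J_{n,j} = Σ_{i, Σi=j} q^{inv(i)} |i⟩⊗|1-i⟩`. -/
def Jfull (q : ℂ) {L : Type} [Field L] (ι : ℂ →+* L) {n : ℕ} (ε : Fin n → Bool)
    (j : ℕ) : WW L ε :=
  ∑ i ∈ Fintype.piFinset (fun _ : Fin n => Finset.range 2),
    (if (∑ t, i t) = j then
        ι (q ^ (∑ s : Fin n, ∑ t : Fin n, if s < t then i s * (1 - i t) else 0))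
      else 0) •
      kk L ε (fun t => (i t : ℤ)) (fun t => 1 - (i t : ℤ))

/-- Extension of a `Fin s`-tuple to `ℕ` by zero. -/
def ivf {s : ℕ} (i : Fin s → ℕ) : ℕ → ℕ := fun p => if h : p < s then i ⟨p, h⟩ else 0

/-- `inv(i₁,…,i_s) = Σ_{p<r} i_p (1 - i_r)`. -/
def invv (s : ℕ) (iv : ℕ → ℕ) : ℕ :=
  ∑ p ∈ Finset.range s, ∑ r ∈ Finset.range s, if p < r then iv p * (1 - iv r) else 0

/-- Occupation vector `(0^{nn-s-t}, i₁,…,i_s, 1^t)`. -/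
def winA (nn s t : ℕ) (iv : ℕ → ℕ) : Fin nn → ℤ := fun u =>
  if (u : ℕ) < nn - s - t then 0
  else if (u : ℕ) < nn - t then (iv ((u : ℕ) - (nn - s - t)) : ℤ)
  else 1

/-- The singular vector `ξ_t^{l,m}` for `κ = n`. -/
def xiA (q : ℂ) {L : Type} [Field L] (ι : ℂ →+* L) {n : ℕ} (ε : Fin n → Bool)
    (l m t : ℕ) : WW L ε :=
  ∑ i ∈ Fintype.piFinset (fun _ : Fin (l + m - 2 * t) => Finset.range 2),
    (if (∑ u, i u) = l - t then ι (q ^ invv (l + m - 2 * t) (ivf i)) else 0) •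
      kk L ε (winA n (l + m - 2 * t) t (ivf i))
        (winA n (l + m - 2 * t) t (fun p => 1 - ivf i p))

/-- Occupation vector `(0^{nn-s-1}, i₁,…,i_s, last)`. -/
def winA1 (nn s : ℕ) (iv : ℕ → ℕ) (last : ℤ) : Fin nn → ℤ := fun u =>
  if (u : ℕ) < nn - s - 1 then 0
  else if (u : ℕ) < nn - 1 then (iv ((u : ℕ) - (nn - s - 1)) : ℤ)
  else last

/-- The singular vector `ξ_s^{l,m}` for `κ = n-1`. -/
def xiA1 (q : ℂ) {L : Type} [Field L] (ι : ℂ →+* L) {n : ℕ} (ε : Fin n → Bool)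
    (l m s : ℕ) : WW L ε :=
  ∑ j ∈ Finset.range (s + 1),
    ∑ i ∈ Fintype.piFinset (fun _ : Fin s => Finset.range 2),
      (if (∑ u, i u) = s - j then
          ι ((-1 : ℂ) ^ j * q ^ (j * (m - s + 1)) * q ^ invv s (ivf i))
        else 0) •
        kk L ε (winA1 n s (ivf i) ((l : ℤ) + (j : ℤ) - (s : ℤ)))
          (winA1 n s (fun p => 1 - ivf i p) ((m : ℤ) - (j : ℤ)))

/-- The singular vector `ξ_s^{l,m}` for `0 ≤ κ ≤ n-2`. -/
def xiA2 (q : ℂ) {L : Type} [Field L] (ι : ℂ →+* L) {n : ℕ} (ε : Fin n → Bool)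
    (l m s : ℕ) : WW L ε :=
  ∑ j ∈ Finset.range (s + 1),
    ι ((-1 : ℂ) ^ j * q ^ ((j : ℤ) * (2 * (s : ℤ) - (m : ℤ) - (j : ℤ) - 1) + (m : ℤ) * (s : ℤ)) *
        qbin q s j) •
      kk L ε
        (fun u => if (u : ℕ) < n - 2 then 0
          else if (u : ℕ) = n - 2 then (j : ℤ) else (l : ℤ) - (j : ℤ))
        (fun u => if (u : ℕ) < n - 2 then 0
          else if (u : ℕ) = n - 2 then (s : ℤ) - (j : ℤ) else (m : ℤ) - (s : ℤ) + (j : ℤ))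

/-- The type B singular vector `ξ_l`. -/
def xiB (q pc : ℂ) {L : Type} [Field L] (ι : ℂ →+* L) {n : ℕ} (ε : Fin n → Bool)
    (l : ℕ) : WW L ε :=
  ∑ m ∈ Finset.range (l + 1),
    ι ((-pc) ^ (-(m : ℤ)) * q ^ ((m : ℤ) * (l : ℤ) - ((m * (m + 1) / 2 : ℕ) : ℤ)) *
        qbin q l m) •
      kk L ε (fun u => if (u : ℕ) = n - 1 then (m : ℤ) else 0)
        (fun u => if (u : ℕ) = n - 1 then (l : ℤ) - (m : ℤ) else 0)

/-! ## Miscellany -/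

/-- Apply a list of operators, the rightmost element of the list acting first. -/
def appList {L : Type} [Field L] {n : ℕ} {ε : Fin n → Bool}
    (ops : List (WW L ε →ₗ[L] WW L ε)) (v : WW L ε) : WW L ε :=
  ops.foldr (fun A w => A w) v

/-- A natural number as an element of `Fin n`. -/
def mfin {n : ℕ} [NeZero n] (p : ℕ) : Fin n :=
  ⟨p % n, Nat.mod_lt p (Nat.pos_of_ne_zero (NeZero.ne n))⟩

/-- Reference weight-`l` occupation vector: `(0^{n-l},1^l)` if `κ = n`, `l·e_n` otherwise. -/
def refAN (n κ l : ℕ) : Fin n → ℕ := fun t =>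
  if κ = n then (if n - l ≤ (t : ℕ) then 1 else 0) else (if (t : ℕ) = n - 1 then l else 0)

/-- The flip `P(u⊗v) = v⊗u` on `𝒲⊗𝒲`. -/
def Pop (L : Type) [Field L] {n : ℕ} (ε : Fin n → Bool) : WW L ε →ₗ[L] WW L ε :=
  mkEnd L fun p => Finsupp.single (p.2, p.1) 1

/-! ### Operators on the triple Fock space -/

/-- The space `F ⊗ F ⊗ F` of three bosonic Fock spaces, with basis `|a,b,c⟩`. -/
abbrev F3 : Type := (ℕ × ℕ × ℕ) →₀ ℂ

/-- The basis vector `|a,b,c⟩` of `F3`. -/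
def bv (a b c : ℕ) : F3 := Finsupp.single (a, b, c) 1

/-- The operator on `F3` with prescribed images of the basis vectors. -/
def mk3 {M : Type} [AddCommMonoid M] [Module ℂ M] (f : ℕ → ℕ → ℕ → M) : F3 →ₗ[ℂ] M :=
  Finsupp.linearCombination ℂ fun x : ℕ × ℕ × ℕ => f x.1 x.2.1 x.2.2

@[simp] lemma mk3_bv {M : Type} [AddCommMonoid M] [Module ℂ M] (f : ℕ → ℕ → ℕ → M) (a b c : ℕ) :
    mk3 f (bv a b c) = f a b c := by
  simp [mk3, bv]

lemma F3_ext {M : Type} [AddCommMonoid M] [Module ℂ M] {A B : F3 →ₗ[ℂ] M}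
    (h : ∀ a b c, A (bv a b c) = B (bv a b c)) : A = B := by
  refine Finsupp.lhom_ext' fun x => LinearMap.ext_ring ?_
  exact h x.1 x.2.1 x.2.2

/-- `k₃ a₁⁺ + k₁ a₂⁺ a₃⁻`, the operator with `R a₁⁺ k₂ = V R`. -/
def opV (q : ℂ) : F3 →ₗ[ℂ] F3 :=
  mk3 fun a b c => q ^ c • bv (a + 1) b c + (q ^ a * (1 - q ^ (2 * c))) • bv a (b + 1) (c - 1)

/-- `a₁⁺ a₃⁺ - q k₁ k₃ a₂⁺`, the operator with `R a₂⁺ = U R`. -/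
def opU (q : ℂ) : F3 →ₗ[ℂ] F3 :=
  mk3 fun a b c => bv (a + 1) b (c + 1) - q ^ (1 + a + c) • bv a (b + 1) c

/-- `k₁ a₃⁺ + k₃ a₁⁻ a₂⁺`, the operator with `R a₃⁺ k₂ = P R`. -/
def opP (q : ℂ) : F3 →ₗ[ℂ] F3 :=
  mk3 fun a b c => q ^ a • bv a b (c + 1) + (q ^ c * (1 - q ^ (2 * a))) • bv (a - 1) (b + 1) c

/-- `k₁ a₃⁻ + k₃ a₁⁺ a₂⁻`, the operator with `R k₂ a₃⁻ = Q R`. -/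
def opQ (q : ℂ) : F3 →ₗ[ℂ] F3 :=
  mk3 fun a b c => (q ^ a * (1 - q ^ (2 * c))) • bv a b (c - 1) +
    (q ^ c * (1 - q ^ (2 * b))) • bv (a + 1) (b - 1) c

/-- `k₂ a₃⁺`. -/
def opA (q : ℂ) : F3 →ₗ[ℂ] F3 := mk3 fun a b c => q ^ b • bv a b (c + 1)

/-- `k₂ a₃⁻`. -/
def opB (q : ℂ) : F3 →ₗ[ℂ] F3 := mk3 fun a b c => (q ^ b * (1 - q ^ (2 * c))) • bv a b (c - 1)

/-- `a₁⁻ a₂⁺ a₃⁻ - q k₁ k₃`. -/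
def opC (q : ℂ) : F3 →ₗ[ℂ] F3 :=
  mk3 fun a b c => ((1 - q ^ (2 * a)) * (1 - q ^ (2 * c))) • bv (a - 1) (b + 1) (c - 1) -
    q ^ (1 + a + c) • bv a b c

/-- `a₁⁺ a₂⁻ a₃⁺ - q k₁ k₃`. -/
def opD (q : ℂ) : F3 →ₗ[ℂ] F3 :=
  mk3 fun a b c => (1 - q ^ (2 * b)) • bv (a + 1) (b - 1) (c + 1) -
    q ^ (1 + a + c) • bv a b c

/-- `a₂⁺`. -/
def opY : F3 →ₗ[ℂ] F3 := mk3 fun a b c => bv a (b + 1) c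

/-- `k₁ k₂`. -/
def opK12 (q : ℂ) : F3 →ₗ[ℂ] F3 := mk3 fun a b c => q ^ (a + b) • bv a b c

/-- `k₂ k₃`. -/
def opK23 (q : ℂ) : F3 →ₗ[ℂ] F3 := mk3 fun a b c => q ^ (b + c) • bv a b c

section Commutation

variable (q : ℂ)

lemma VU (x : F3) : opV q (opU q x) = q • opU q (opV q x) := by
  refine LinearMap.congr_fun (f := opV q ∘ₗ opU q) (g := q • opU q ∘ₗ opV q) (F3_ext ?_) x
  rintro a b c
  rcases c with _ | c <;> simp [opV, opU] <;> match_scalars <;> ring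

lemma PU (x : F3) : opP q (opU q x) = q • opU q (opP q x) := by
  refine LinearMap.congr_fun (f := opP q ∘ₗ opU q) (g := q • opU q ∘ₗ opP q) (F3_ext ?_) x
  rintro a b c
  rcases a with _ | a <;> simp [opP, opU] <;> match_scalars <;> ring

lemma PV (x : F3) : opP q (opV q x) = opV q (opP q x) := by
  refine LinearMap.congr_fun (f := opP q ∘ₗ opV q) (g := opV q ∘ₗ opP q) (F3_ext ?_) x
  rintro a b c
  rcases a with _ | a <;> rcases c with _ | c <;> simp [opP, opV] <;> match_scalars <;> ring

lemma QU (x : F3) : opQ q (opU q x) = q • opU q (opQ q x) := by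
  refine LinearMap.congr_fun (f := opQ q ∘ₗ opU q) (g := q • opU q ∘ₗ opQ q) (F3_ext ?_) x
  rintro a b c
  rcases b with _ | b <;> rcases c with _ | c <;> simp [opQ, opU] <;> match_scalars <;> ring

lemma QV (x : F3) : opQ q (opV q x) = opV q (opQ q x) := by
  refine LinearMap.congr_fun (f := opQ q ∘ₗ opV q) (g := opV q ∘ₗ opQ q) (F3_ext ?_) x
  rintro a b c
  rcases b with _ | b <;> rcases c with _ | _ | c <;> simp [opQ, opV] <;> match_scalars <;> ring

lemma AU (x : F3) : opA q (opU q x) = opU q (opA q x) := by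
  refine LinearMap.congr_fun (f := opA q ∘ₗ opU q) (g := opU q ∘ₗ opA q) (F3_ext ?_) x
  rintro a b c
  simp [opA, opU] <;> match_scalars <;> ring

lemma AV (x : F3) :
    opA q (opV q x) = q • opV q (opA q x) + (1 - q ^ 2) • opU q (opK23 q x) := by
  refine LinearMap.congr_fun (f := opA q ∘ₗ opV q)
    (g := q • opV q ∘ₗ opA q + (1 - q ^ 2) • opU q ∘ₗ opK23 q) (F3_ext ?_) x
  rintro a b c
  rcases c with _ | c <;> simp [opA, opU, opV, opK23] <;> match_scalars <;> ring

lemma CU (x : F3) : opC q (opU q x) = opY x - q ^ 2 • opV q (opP q x) := by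
  refine LinearMap.congr_fun (f := opC q ∘ₗ opU q)
    (g := opY - q ^ 2 • opV q ∘ₗ opP q) (F3_ext ?_) x
  rintro a b c
  rcases a with _ | a <;> rcases c with _ | c <;>
    simp [opC, opU, opV, opY, opP] <;> match_scalars <;> ring

lemma CV (x : F3) : opC q (opV q x) = q • opV q (opC q x) := by
  refine LinearMap.congr_fun (f := opC q ∘ₗ opV q) (g := q • opV q ∘ₗ opC q) (F3_ext ?_) x
  rintro a b c
  rcases a with _ | a <;> rcases c with _ | _ | c <;>
    simp [opC, opV] <;> match_scalars <;> ring

lemma DU (x : F3) : opD q (opU q x) = opU q (opD q x) := by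
  refine LinearMap.congr_fun (f := opD q ∘ₗ opU q) (g := opU q ∘ₗ opD q) (F3_ext ?_) x
  rintro a b c
  rcases b with _ | b <;> simp [opD, opU] <;> match_scalars <;> ring

lemma DV (x : F3) :
    opD q (opV q x) = q • opV q (opD q x) + (1 - q ^ 2) • opU q (opQ q x) := by
  refine LinearMap.congr_fun (f := opD q ∘ₗ opV q)
    (g := q • opV q ∘ₗ opD q + (1 - q ^ 2) • opU q ∘ₗ opQ q) (F3_ext ?_) x
  rintro a b c
  rcases b with _ | b <;> rcases c with _ | c <;>
    simp [opD, opU, opV, opQ] <;> match_scalars <;> ring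

lemma BU (x : F3) :
    opB q (opU q x) = opU q (opB q x) + (1 - q ^ 2) • opV q (opK23 q x) := by
  refine LinearMap.congr_fun (f := opB q ∘ₗ opU q)
    (g := opU q ∘ₗ opB q + (1 - q ^ 2) • opV q ∘ₗ opK23 q) (F3_ext ?_) x
  rintro a b c
  rcases c with _ | c <;> simp [opB, opU, opV, opK23] <;> match_scalars <;> ring

lemma BV (x : F3) : opB q (opV q x) = q • opV q (opB q x) := by
  refine LinearMap.congr_fun (f := opB q ∘ₗ opV q) (g := q • opV q ∘ₗ opB q) (F3_ext ?_) x
  rintro a b c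
  rcases c with _ | _ | c <;> simp [opB, opV] <;> match_scalars <;> ring

lemma YU (x : F3) : opY (opU q x) = opU q (opY x) := by
  refine LinearMap.congr_fun (f := opY ∘ₗ opU q) (g := opU q ∘ₗ opY) (F3_ext ?_) x
  rintro a b c
  simp [opY, opU]

lemma YV (x : F3) : opY (opV q x) = opV q (opY x) := by
  refine LinearMap.congr_fun (f := opY ∘ₗ opV q) (g := opV q ∘ₗ opY) (F3_ext ?_) x
  rintro a b c
  simp [opY, opV]

lemma K12U (x : F3) : opK12 q (opU q x) = q • opU q (opK12 q x) := by
  refine LinearMap.congr_fun (f := opK12 q ∘ₗ opU q) (g := q • opU q ∘ₗ opK12 q) (F3_ext ?_) x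
  rintro a b c
  simp [opK12, opU] <;> match_scalars <;> ring

lemma K12V (x : F3) : opK12 q (opV q x) = q • opV q (opK12 q x) := by
  refine LinearMap.congr_fun (f := opK12 q ∘ₗ opV q) (g := q • opV q ∘ₗ opK12 q) (F3_ext ?_) x
  rintro a b c
  simp [opK12, opV] <;> match_scalars <;> ring

lemma K23U (x : F3) : opK23 q (opU q x) = q • opU q (opK23 q x) := by
  refine LinearMap.congr_fun (f := opK23 q ∘ₗ opU q) (g := q • opU q ∘ₗ opK23 q) (F3_ext ?_) x
  rintro a b c
  simp [opK23, opU] <;> match_scalars <;> ring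

lemma K23V (x : F3) : opK23 q (opV q x) = opV q (opK23 q x) := by
  refine LinearMap.congr_fun (f := opK23 q ∘ₗ opV q) (g := opV q ∘ₗ opK23 q) (F3_ext ?_) x
  rintro a b c
  rcases c with _ | c <;> simp [opK23, opV] <;> match_scalars <;> ring

end Commutation

/-! ### The columns of the 3D `R` -/

/-- `R|i,j,k⟩`. -/
def Rv (q : ℂ) (i j k : ℕ) : F3 :=
  ∑ p ∈ Finset.HasAntidiagonal.antidiagonal (i + j),
    R3 q p.1 p.2 (j + k - p.2) i j k • bv p.1 p.2 (j + k - p.2)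

/-- The sum over `λ` in the definition of `R`, without the conservation law. -/
def Rs (q : ℂ) (b c i j k : ℕ) : ℂ :=
  ∑ lam ∈ Finset.range (b + 1),
      (-1 : ℂ) ^ lam *
        q ^ ((i : ℤ) * ((c : ℤ) - (j : ℤ)) + ((k : ℤ) + 1) * (lam : ℤ) +
            ((b : ℤ) - (lam : ℤ)) * ((b : ℤ) - (lam : ℤ) - (k : ℤ))) *
        (poch (q ^ 2) (q ^ 2) (c + (b - lam)) / poch (q ^ 2) (q ^ 2) c) *
        qbinom (q ^ 2) i (b - lam) * qbinom (q ^ 2) j lam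

/-- The summand of `Rs` with `λ = lam`, `μ = mu`. -/
def Rt (q : ℂ) (c i j k lam mu : ℕ) : ℂ :=
  (-1 : ℂ) ^ lam *
        q ^ ((i : ℤ) * ((c : ℤ) - (j : ℤ)) + ((k : ℤ) + 1) * (lam : ℤ) +
            (mu : ℤ) * ((mu : ℤ) - (k : ℤ))) *
        (poch (q ^ 2) (q ^ 2) (c + mu) / poch (q ^ 2) (q ^ 2) c) *
        qbinom (q ^ 2) i mu * qbinom (q ^ 2) j lam

lemma Rs_eq (q : ℂ) (b c i j k : ℕ) :
    Rs q b c i j k = ∑ lam ∈ Finset.range (b + 1), Rt q c i j k lam (b - lam) := by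
  refine Finset.sum_congr rfl fun lam hl => ?_
  have : lam ≤ b := Nat.lt_succ_iff.mp (Finset.mem_range.mp hl)
  simp only [Rt]
  push_cast [Nat.cast_sub this]
  rfl

lemma R3_eq (q : ℂ) (a b c i j k : ℕ) :
    R3 q a b c i j k = if a + b = i + j ∧ b + c = j + k then Rs q b c i j k else 0 := by
  split_ifs with h <;> simp [R3, Rs, h]

lemma qbinom_of_lt {Q : ℂ} {m k : ℕ} (h : m < k) : qbinom Q m k = 0 := by
  simp [qbinom, not_le.mpr h]

lemma Rs_zero (q : ℂ) (b c i j k : ℕ) (h : i + j < b) : Rs q b c i j k = 0 := by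
  rw [Rs_eq]
  refine Finset.sum_eq_zero fun lam _ => ?_
  rcases lt_or_ge j lam with h1 | h1
  · simp [Rt, qbinom_of_lt h1]
  · have : i < b - lam := by omega
    simp [Rt, qbinom_of_lt this]

lemma Rv_apply (q : ℂ) (a b c i j k : ℕ) :
    Rv q i j k (a, b, c) = R3 q a b c i j k := by
  simp only [Rv, Finsupp.coe_finsetSum, Finset.sum_apply, Finsupp.smul_apply, bv, smul_eq_mul]
  by_cases h : a + b = i + j ∧ b + c = j + k
  · rw [Finset.sum_eq_single (a, b)]
    · have : j + k - b = c := by omega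
      simp [this]
    · rintro ⟨a', b'⟩ _ hne
      rw [Finsupp.single_eq_of_ne, mul_zero]
      rintro h'
      simp only [Prod.mk.injEq] at h'
      exact hne (by simp [h'.1, h'.2.1])
    · intro hn
      exact absurd (by simpa using h.1) hn
  · rw [R3_eq q a b c, if_neg h]
    refine Finset.sum_eq_zero ?_
    rintro ⟨a', b'⟩ hm
    have hm' : a' + b' = i + j := by simpa using hm
    by_cases hc : b' + (j + k - b') = j + k
    · rw [Finsupp.single_eq_of_ne, mul_zero]
      rintro h'
      simp only [Prod.mk.injEq] at h'
      obtain ⟨rfl, rfl, rfl⟩ := h'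
      exact h ⟨hm', hc⟩
    · rw [R3_eq, if_neg (by simp only [not_and]; intro _; exact hc), zero_mul]

section Recursion

variable {q : ℂ} (hq0 : q ≠ 0) (hq : ∀ k : ℕ, k ≠ 0 → q ^ k ≠ 1)
include hq

lemma one_sub_ne (m : ℕ) (hm : m ≠ 0) : 1 - q ^ m ≠ 0 :=
  sub_ne_zero.mpr (hq m hm).symm

lemma poch_ne (m : ℕ) : poch (q ^ 2) (q ^ 2) m ≠ 0 := by
  refine Finset.prod_ne_zero_iff.mpr fun k _ => ?_
  have := one_sub_ne hq (2 + 2 * k) (by omega)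
  rwa [pow_add, pow_mul] at this

omit hq in
lemma poch_succ' (m : ℕ) :
    poch (q ^ 2) (q ^ 2) (m + 1) = poch (q ^ 2) (q ^ 2) m * (1 - q ^ (2 * (m + 1))) := by
  rw [poch, Finset.prod_range_succ, ← poch]
  congr 2
  ring

/-- The `q²`-Pascal rule. -/
lemma qbinom_succ (i mu : ℕ) :
    qbinom (q ^ 2) (i + 1) (mu + 1) =
      qbinom (q ^ 2) i (mu + 1) + q ^ (2 * (i - mu)) * qbinom (q ^ 2) i mu := by
  rcases lt_trichotomy i mu with h | h | h
  · rw [qbinom_of_lt h, qbinom_of_lt (by omega), qbinom_of_lt (by omega)]; simp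
  · subst h
    rw [qbinom_of_lt (Nat.lt_succ_self i)]
    have h1 := poch_ne hq (i + 1)
    have h2 := poch_ne hq i
    have p0 : poch (q ^ 2) (q ^ 2) 0 = 1 := by simp [poch]
    simp [qbinom, p0, h1, h2]
  · obtain ⟨d, rfl⟩ := Nat.exists_eq_add_of_lt h
    have e1 : mu + d + 1 + 1 - (mu + 1) = d + 1 := by omega
    have e2 : mu + d + 1 - (mu + 1) = d := by omega
    have e3 : mu + d + 1 - mu = d + 1 := by omega
    have l1 : mu + 1 ≤ mu + d + 1 + 1 := by omega
    have l2 : mu + 1 ≤ mu + d + 1 := by omega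
    have l3 : mu ≤ mu + d + 1 := by omega
    simp only [qbinom, e1, e2, e3, if_pos l1, if_pos l2, if_pos l3]
    rw [poch_succ' mu, poch_succ' d, poch_succ' (mu + d + 1)]
    have h1 := poch_ne hq mu
    have h2 := poch_ne hq d
    have h3 := one_sub_ne hq (2 * (mu + 1)) (by omega)
    have h4 := one_sub_ne hq (2 * (d + 1)) (by omega)
    field_simp
    ring

lemma qbinom_zero_right (i : ℕ) : qbinom (q ^ 2) i 0 = 1 := by
  have := poch_ne hq i
  simp [qbinom, poch] at this ⊢
  exact this

include hq0

lemma Rt_succ (a c i j k lam mu : ℕ) (h1 : a + (lam + mu) = i + 1 + j) (h2 : lam + mu + c = j + k) :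
    q ^ j * Rt q c (i + 1) j k lam mu = q ^ c * Rt q c i j k lam mu +
      if mu = 0 then 0 else
        q ^ a * (1 - q ^ (2 * (c + 1))) * Rt q (c + 1) i j k lam (mu - 1) := by
  have hk : (k : ℤ) = lam + mu + c - j := by omega
  have ha : (a : ℤ) = i + 1 + j - lam - mu := by omega
  have e1 : q ^ j * q ^ (((i + 1 : ℕ) : ℤ) * ((c : ℤ) - (j : ℤ)) + ((k : ℤ) + 1) * (lam : ℤ) +
            (mu : ℤ) * ((mu : ℤ) - (k : ℤ))) = q ^ c * q ^ ((i : ℤ) * ((c : ℤ) - (j : ℤ)) +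
            ((k : ℤ) + 1) * (lam : ℤ) + (mu : ℤ) * ((mu : ℤ) - (k : ℤ))) := by
    rw [← zpow_natCast, ← zpow_natCast q c, ← zpow_add₀ hq0, ← zpow_add₀ hq0]
    congr 1
    push_cast
    ring
  rcases mu with _ | mu
  · simp only [Rt, qbinom_zero_right hq, if_true, add_zero]
    linear_combination (-1) ^ lam * (poch (q ^ 2) (q ^ 2) c / poch (q ^ 2) (q ^ 2) c) *
      qbinom (q ^ 2) j lam * e1
  · simp only [Nat.add_eq_zero_iff, one_ne_zero, and_false, if_false, Nat.add_sub_cancel]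
    rcases lt_or_ge i mu with him | him
    · simp [Rt, qbinom_of_lt him, qbinom_of_lt (him.trans (Nat.lt_succ_self mu)),
        qbinom_of_lt (Nat.succ_lt_succ him)]
    have e2 : q ^ c * q ^ ((i : ℤ) * ((c : ℤ) - (j : ℤ)) + ((k : ℤ) + 1) * (lam : ℤ) +
            ((mu + 1 : ℕ) : ℤ) * (((mu + 1 : ℕ) : ℤ) - (k : ℤ))) * q ^ (2 * (i - mu)) =
        q ^ a * q ^ ((i : ℤ) * (((c + 1 : ℕ) : ℤ) - (j : ℤ)) + ((k : ℤ) + 1) * (lam : ℤ) +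
            (mu : ℤ) * ((mu : ℤ) - (k : ℤ))) := by
      rw [← zpow_natCast q c, ← zpow_natCast q a, ← zpow_natCast q (2 * (i - mu)),
        ← zpow_add₀ hq0, ← zpow_add₀ hq0, ← zpow_add₀ hq0]
      congr 1
      rw [ha]
      push_cast [Nat.cast_sub him]
      push_cast at hk
      linear_combination -hk
    have e3 : c + 1 + mu = c + (mu + 1) := by ring
    simp only [Rt, qbinom_succ hq i mu, e3, poch_succ' c]
    have h3 := one_sub_ne hq (2 * (c + 1)) (by omega)
    have h4 : (1 - q ^ (2 * (c + 1))) * (poch (q ^ 2) (q ^ 2) (c + (mu + 1)) /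
        (poch (q ^ 2) (q ^ 2) c * (1 - q ^ (2 * (c + 1))))) =
        poch (q ^ 2) (q ^ 2) (c + (mu + 1)) / poch (q ^ 2) (q ^ 2) c := by
      have := poch_ne hq c
      field_simp
    set W := poch (q ^ 2) (q ^ 2) (c + (mu + 1)) / poch (q ^ 2) (q ^ 2) c
    linear_combination (-1) ^ lam * W *
      qbinom (q ^ 2) j lam *
        (qbinom (q ^ 2) i (mu + 1) + q ^ (2 * (i - mu)) * qbinom (q ^ 2) i mu) * e1 +
      (-1) ^ lam * W * qbinom (q ^ 2) j lam * qbinom (q ^ 2) i mu * e2 -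
      (-1) ^ lam * qbinom (q ^ 2) j lam * qbinom (q ^ 2) i mu * q ^ a *
        q ^ ((i : ℤ) * (((c + 1 : ℕ) : ℤ) - (j : ℤ)) + ((k : ℤ) + 1) * (lam : ℤ) +
            (mu : ℤ) * ((mu : ℤ) - (k : ℤ))) * h4

lemma Rs_succ (a b c i j k : ℕ) (h1 : a + b = i + 1 + j) (h2 : b + c = j + k) :
    q ^ j * Rs q b c (i + 1) j k = q ^ c * Rs q b c i j k +
      if b = 0 then 0 else
        q ^ a * (1 - q ^ (2 * (c + 1))) * Rs q (b - 1) (c + 1) i j k := by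
  rw [Rs_eq, Rs_eq, Finset.mul_sum]
  rw [Finset.sum_congr rfl (fun lam hl => Rt_succ hq0 hq a c i j k lam (b - lam)
    (by have := Finset.mem_range.mp hl; omega) (by have := Finset.mem_range.mp hl; omega))]
  rw [Finset.sum_add_distrib, ← Finset.mul_sum]
  congr 1
  rcases b with _ | b
  · simp
  · rw [Finset.sum_range_succ]
    simp only [Nat.sub_self, if_true, add_zero, Nat.add_eq_zero_iff, one_ne_zero, and_false,
      if_false, Nat.add_sub_cancel]
    rw [Rs_eq, Finset.mul_sum]
    refine Finset.sum_congr rfl fun lam hl => ?_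
    have := Finset.mem_range.mp hl
    rw [if_neg (by omega)]
    congr 2
    omega

omit hq0 in
lemma Rs_zero_left (b c j k : ℕ) :
    Rs q b c 0 j k = (-1) ^ b * q ^ ((k + 1) * b) * qbinom (q ^ 2) j b := by
  rw [Rs_eq, Finset.sum_range_succ, Finset.sum_eq_zero, zero_add]
  · have := poch_ne hq c
    simp only [Rt, Nat.sub_self, qbinom_zero_right hq, add_zero, div_self this]
    have e : ((0 : ℕ) : ℤ) * ((c : ℤ) - (j : ℤ)) + ((k : ℤ) + 1) * (b : ℤ) +
        ((0 : ℕ) : ℤ) * (((0 : ℕ) : ℤ) - (k : ℤ)) = (((k + 1) * b : ℕ) : ℤ) := by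
      push_cast
      ring
    rw [e, zpow_natCast]
    ring
  · intro lam hl
    have : 0 < b - lam := Nat.sub_pos_of_lt (Finset.mem_range.mp hl)
    simp [Rt, qbinom_of_lt this]

end Recursion

lemma opV_apply (q : ℂ) (x : F3) (a b c : ℕ) :
    opV q x (a, b, c) = (if a = 0 then 0 else q ^ c * x (a - 1, b, c)) +
      if b = 0 then 0 else q ^ a * (1 - q ^ (2 * (c + 1))) * x (a, b - 1, c + 1) := by
  induction x using Finsupp.induction_linear with
  | zero => simp
  | add x y hx hy =>
    simp only [map_add, Finsupp.add_apply, hx, hy]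
    split_ifs <;> ring
  | single s r =>
    obtain ⟨a', b', c'⟩ := s
    have : Finsupp.single (a', b', c') r = r • bv a' b' c' := by simp [bv]
    rw [this, map_smul, opV, mk3_bv]
    rcases a with _ | a <;> rcases b with _ | b <;> rcases c' with _ | c' <;>
      simp [bv, Finsupp.single_apply] <;> split_ifs <;> simp_all <;>
      first
        | ring1
        | (rename_i h; obtain ⟨-, -, rfl⟩ := h; simp)

lemma opU_apply (q : ℂ) (x : F3) (a b c : ℕ) :
    opU q x (a, b, c) = (if a = 0 ∨ c = 0 then 0 else x (a - 1, b, c - 1)) -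
      if b = 0 then 0 else q ^ (1 + a + c) * x (a, b - 1, c) := by
  induction x using Finsupp.induction_linear with
  | zero => simp
  | add x y hx hy =>
    simp only [map_add, Finsupp.add_apply, hx, hy]
    split_ifs <;> ring
  | single s r =>
    obtain ⟨a', b', c'⟩ := s
    have : Finsupp.single (a', b', c') r = r • bv a' b' c' := by simp [bv]
    rw [this, map_smul, opU, mk3_bv]
    rcases a with _ | a <;> rcases b with _ | b <;> rcases c with _ | c <;>
      simp [bv, Finsupp.single_apply] <;> split_ifs <;> simp_all <;> ring

/-! ### `R` as an intertwiner -/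

/-- A property of the columns of `R` holds in general once it holds at `i = j = 0` and is
propagated by the two creation steps. -/
lemma Rv_induction {Pr : ℕ → ℕ → Prop} (h0 : Pr 0 0)
    (hV : ∀ i, Pr i 0 → Pr (i + 1) 0)
    (hU : ∀ i j, Pr i j → Pr i (j + 1)) (i j : ℕ) : Pr i j := by
  induction j with
  | zero =>
    induction i with
    | zero => exact h0
    | succ i ih => exact hV i ih
  | succ j ih => exact hU i j ih

section Columns

variable {q : ℂ} (hq0 : q ≠ 0) (hq : ∀ k : ℕ, k ≠ 0 → q ^ k ≠ 1)
include hq0 hq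

omit hq0 in
lemma Rv_zero (k : ℕ) : Rv q 0 0 k = bv 0 0 k := by
  have h := poch_ne hq k
  have p0 : poch (q ^ 2) (q ^ 2) 0 = 1 := by simp [poch]
  simp [Rv, R3, qbinom, p0, h]

lemma Rv_succ_left (i j k : ℕ) : q ^ j • Rv q (i + 1) j k = opV q (Rv q i j k) := by
  ext ⟨a, b, c⟩
  simp only [Finsupp.smul_apply, smul_eq_mul, Rv_apply, opV_apply, R3_eq]
  by_cases h : a + b = i + 1 + j ∧ b + c = j + k
  · rw [if_pos h, Rs_succ hq0 hq a b c i j k h.1 h.2]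
    congr 1
    · rcases a with _ | a
      · rw [Rs_zero q b c i j k (by omega)]
        simp
      · rw [if_neg (by omega), if_pos (by omega)]
    · rcases b with _ | b
      · simp
      · rw [if_neg (by omega), if_neg (by omega), if_pos (by omega)]
  · rw [if_neg h]
    rcases a with _ | a <;> rcases b with _ | b <;>
      simp only [Nat.add_eq_zero_iff, one_ne_zero, and_false, if_true, if_false,
        Nat.add_sub_cancel, mul_zero, zero_add, add_zero]
    · rw [if_neg (by omega)]; simp
    · rw [if_neg (by omega)]; simp
    · rw [if_neg (by omega), if_neg (by omega)]; simp

omit hq0 in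
lemma Rv_zero_succ (j k : ℕ) : Rv q 0 (j + 1) k = opU q (Rv q 0 j k) := by
  ext ⟨a, b, c⟩
  simp only [Rv_apply, opU_apply, R3_eq]
  by_cases h : a + b = 0 + (j + 1) ∧ b + c = j + 1 + k
  · rw [if_pos h]
    have h1 : (if a = 0 ∨ c = 0 then (0 : ℂ) else
        if a - 1 + b = 0 + j ∧ b + (c - 1) = j + k then Rs q b (c - 1) 0 j k else 0) =
        (-1) ^ b * q ^ ((k + 1) * b) * qbinom (q ^ 2) j b := by
      split_ifs with h1 h2
      · rw [qbinom_of_lt (by omega), mul_zero]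
      · rw [Rs_zero_left hq]
      · omega
    rw [h1, Rs_zero_left hq]
    rcases b with _ | b
    · simp [qbinom_zero_right hq]
    · rw [if_neg (by omega), if_pos (by omega), Nat.add_sub_cancel, Rs_zero_left hq,
        qbinom_succ hq]
      have : 1 + a + c = (k + 1) + 2 * (j - b) := by omega
      rw [this]
      ring
  · rw [if_neg h]
    have h1 : (if a = 0 ∨ c = 0 then (0 : ℂ) else
        if a - 1 + b = 0 + j ∧ b + (c - 1) = j + k then Rs q b (c - 1) 0 j k else 0) = 0 := by
      split_ifs with h1 h2
      · rfl
      · omega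
      · rfl
    rw [h1]
    rcases b with _ | b
    · simp
    · rw [if_neg (by omega), if_neg (by omega)]
      simp

lemma Rv_zero_right (i k : ℕ) : Rv q (i + 1) 0 k = opV q (Rv q i 0 k) := by
  rw [← Rv_succ_left hq0 hq, pow_zero, one_smul]

lemma Rv_succ_right (i j k : ℕ) : Rv q i (j + 1) k = opU q (Rv q i j k) := by
  induction i with
  | zero => exact Rv_zero_succ hq j k
  | succ i ih =>
    have h : q ^ (j + 1) • Rv q (i + 1) (j + 1) k = q ^ (j + 1) • opU q (Rv q (i + 1) j k) := by
      rw [Rv_succ_left hq0 hq, ih, VU, ← Rv_succ_left hq0 hq, map_smul, smul_smul, pow_succ']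
    exact smul_right_injective _ (pow_ne_zero (j + 1) hq0) h

end Columns

/-! ### Action of the triple Fock space operators on the columns of `R` -/

section ColumnRelations

variable {q : ℂ} (hq0 : q ≠ 0) (hq : ∀ k : ℕ, k ≠ 0 → q ^ k ≠ 1)
include hq0 hq

lemma opK12_Rv (k i j : ℕ) : opK12 q (Rv q i j k) = q ^ (i + j) • Rv q i j k := by
  induction i, j using Rv_induction with
  | h0 =>
    simp [Rv_zero hq, opK12]
  | hV i ih =>
    rw [Rv_zero_right hq0 hq, K12V, ih, map_smul, smul_smul]
    congr 1; ring
  | hU i j ih =>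
    rw [Rv_succ_right hq0 hq, K12U, ih, map_smul, smul_smul]
    congr 1; ring

lemma opK23_Rv (k i j : ℕ) : opK23 q (Rv q i j k) = q ^ (j + k) • Rv q i j k := by
  induction i, j using Rv_induction with
  | h0 =>
    simp [Rv_zero hq, opK23]
  | hV i ih =>
    rw [Rv_zero_right hq0 hq, K23V, ih, map_smul]
  | hU i j ih =>
    rw [Rv_succ_right hq0 hq, K23U, ih, map_smul, smul_smul]
    congr 1; ring

lemma opP_Rv (k i j : ℕ) : opP q (Rv q i j k) = q ^ j • Rv q i j (k + 1) := by
  induction i, j using Rv_induction with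
  | h0 =>
    simp [Rv_zero hq, opP]
  | hV i ih =>
    rw [Rv_zero_right hq0 hq, Rv_zero_right hq0 hq, PV, ih, map_smul]
  | hU i j ih =>
    rw [Rv_succ_right hq0 hq, Rv_succ_right hq0 hq, PU, ih, map_smul, smul_smul]
    congr 1; ring

lemma opQ_Rv (k i j : ℕ) :
    opQ q (Rv q i j k) = (q ^ j * (1 - q ^ (2 * k))) • Rv q i j (k - 1) := by
  induction i, j using Rv_induction with
  | h0 =>
    simp [Rv_zero hq, opQ]
  | hV i ih =>
    rw [Rv_zero_right hq0 hq, Rv_zero_right hq0 hq, QV, ih, map_smul]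
  | hU i j ih =>
    rw [Rv_succ_right hq0 hq, Rv_succ_right hq0 hq, QU, ih, map_smul, smul_smul]
    congr 1; ring

lemma opA_Rv (k i j : ℕ) :
    opA q (Rv q i j k) = ((1 - q ^ (2 * i)) * q ^ k) • Rv q (i - 1) (j + 1) k +
      q ^ i • Rv q i j (k + 1) := by
  induction i, j using Rv_induction with
  | h0 =>
    simp [Rv_zero hq, opA]
  | hV i ih =>
    have h : (1 - q ^ (2 * i)) • opV q (Rv q (i - 1) (0 + 1) k) =
        ((1 - q ^ (2 * i)) * q) • Rv q i 1 k := by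
      rcases i with _ | i
      · simp
      · rw [Nat.add_sub_cancel, ← Rv_succ_left hq0 hq, smul_smul]; simp
    rw [Rv_zero_right hq0 hq, AV, ih, opK23_Rv hq0 hq, map_add, map_smul, map_smul, map_smul,
      ← Rv_zero_right hq0 hq, ← Rv_succ_right hq0 hq, mul_comm (1 - q ^ (2 * i)), mul_smul, h,
      Nat.add_sub_cancel, zero_add]
    match_scalars <;> ring
  | hU i j ih =>
    rw [Rv_succ_right hq0 hq, AU, ih, map_add, map_smul, map_smul, ← Rv_succ_right hq0 hq,
      ← Rv_succ_right hq0 hq]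

lemma opB_Rv (k i j : ℕ) :
    opB q (Rv q i j k) = (q ^ i * (1 - q ^ (2 * k))) • Rv q i j (k - 1) +
      (q ^ k * (1 - q ^ (2 * j))) • Rv q (i + 1) (j - 1) k := by
  induction i, j using Rv_induction with
  | h0 =>
    simp [Rv_zero hq, opB]
  | hV i ih =>
    rw [Rv_zero_right hq0 hq, BV, ih]
    simp only [mul_zero, pow_zero, sub_self, zero_smul, add_zero, map_smul]
    rw [← Rv_zero_right hq0 hq, smul_smul]
    congr 1; ring
  | hU i j ih =>
    have h : (1 - q ^ (2 * j)) • opU q (Rv q (i + 1) (j - 1) k) =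
        (1 - q ^ (2 * j)) • Rv q (i + 1) j k := by
      rcases j with _ | j
      · simp
      · rw [Nat.add_sub_cancel, ← Rv_succ_right hq0 hq]
    rw [Rv_succ_right hq0 hq, BU, ih, opK23_Rv hq0 hq, map_add, map_smul, map_smul, map_smul,
      ← Rv_succ_left hq0 hq, ← Rv_succ_right hq0 hq, mul_smul (q ^ k), h, Nat.add_sub_cancel]
    match_scalars <;> ring

lemma opY_Rv (k i j : ℕ) :
    opY (Rv q i j k) = Rv q (i + 1) j (k + 1) - q ^ (1 + i + k) • Rv q i (j + 1) k := by
  induction i, j using Rv_induction with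
  | h0 =>
    rw [Rv_zero_right hq0 hq, Rv_succ_right hq0 hq, Rv_zero hq, Rv_zero hq]
    simp only [opY, opV, opU, mk3_bv, Nat.add_sub_cancel]
    match_scalars <;> ring
  | hV i ih =>
    rw [Rv_zero_right hq0 hq, YV, ih, map_sub, map_smul, ← Rv_zero_right hq0 hq,
      ← Rv_succ_left hq0 hq, smul_smul]
    congr 2; ring
  | hU i j ih =>
    rw [Rv_succ_right hq0 hq, YU, ih, map_sub, map_smul, ← Rv_succ_right hq0 hq,
      ← Rv_succ_right hq0 hq]

lemma opC_Rv (k i j : ℕ) :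
    opC q (Rv q i j k) = -(q ^ (1 + i + k)) • Rv q i j k +
      (1 - q ^ (2 * j)) • Rv q (i + 1) (j - 1) (k + 1) := by
  induction i, j using Rv_induction with
  | h0 =>
    simp [Rv_zero hq, opC]
  | hV i ih =>
    rw [Rv_zero_right hq0 hq, CV, ih]
    simp only [mul_zero, pow_zero, sub_self, zero_smul, add_zero, map_smul]
    rw [smul_smul]
    congr 1; ring
  | hU i j ih =>
    rw [Rv_succ_right hq0 hq, CU, opY_Rv hq0 hq, opP_Rv hq0 hq, map_smul, ← Rv_succ_left hq0 hq,
      ← Rv_succ_right hq0 hq, Nat.add_sub_cancel]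
    match_scalars <;> ring

lemma opD_Rv (k i j : ℕ) :
    opD q (Rv q i j k) = -(q ^ (1 + i + k)) • Rv q i j k +
      ((1 - q ^ (2 * i)) * (1 - q ^ (2 * k))) • Rv q (i - 1) (j + 1) (k - 1) := by
  induction i, j using Rv_induction with
  | h0 =>
    simp [Rv_zero hq, opD]
  | hV i ih =>
    have h : (1 - q ^ (2 * i)) • opV q (Rv q (i - 1) (0 + 1) (k - 1)) =
        ((1 - q ^ (2 * i)) * q) • Rv q i 1 (k - 1) := by
      rcases i with _ | i
      · simp
      · rw [Nat.add_sub_cancel, ← Rv_succ_left hq0 hq, smul_smul]; simp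
    rw [Rv_zero_right hq0 hq, DV, ih, opQ_Rv hq0 hq, map_add, map_smul, map_smul, map_smul,
      ← Rv_succ_right hq0 hq, mul_comm (1 - q ^ (2 * i)), mul_smul, h,
      Nat.add_sub_cancel, zero_add]
    match_scalars <;> ring
  | hU i j ih =>
    rw [Rv_succ_right hq0 hq, DU, ih, map_add, map_smul, map_smul, ← Rv_succ_right hq0 hq i j k,
      ← Rv_succ_right hq0 hq]

end ColumnRelations

/-! ### Row operators -/

/-- Finite combinations of rows of labels `[(i₁,j₁), …, (i_n,j_n)]`: the direct sum over `n` of the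
spaces `𝒲 ⊗ 𝒲` without the exclusion rule. -/
abbrev Row : Type := List (ℕ × ℕ) →₀ ℂ

/-- The zero of `Row`, taken from the additive structure so that lemmas about additive monoids apply
to `ℕ →₀ Row` up to reducible unfolding. -/
instance : Zero Row := (inferInstance : AddCommMonoid Row).toZero

/-- `F ⊗ Row`, the first factor being the auxiliary Fock space. -/
abbrev ARow : Type := ℕ →₀ Row

/-- Adjoining the label `p` in front of a row. -/
def consL (p : ℕ × ℕ) : Row →ₗ[ℂ] Row := Finsupp.lmapDomain ℂ ℂ (List.cons p)

@[simp] lemma consL_single (p : ℕ × ℕ) (m : List (ℕ × ℕ)) (r : ℂ) :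
    consL p (Finsupp.single m r) = Finsupp.single (p :: m) r := by
  simp [consL]

lemma consL_apply (p p' : ℕ × ℕ) (x : Row) (m : List (ℕ × ℕ)) :
    consL p x (p' :: m) = if p = p' then x m else 0 := by
  induction x using Finsupp.induction_linear with
  | zero => simp
  | add x y hx hy => rw [map_add, Finsupp.add_apply, hx, hy]; split_ifs <;> simp
  | single m' r =>
    rw [consL_single]
    by_cases h : p = p' <;> by_cases h' : m' = m <;> simp [h, h']

lemma Row_ext {M : Type} [AddCommMonoid M] [Module ℂ M] {A B : Row →ₗ[ℂ] M}
    (h : ∀ m, A (Finsupp.single m 1) = B (Finsupp.single m 1)) : A = B :=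
  Finsupp.lhom_ext' fun m => LinearMap.ext_ring (h m)

/-- The embedding `F ⊗ F ⊗ F ⊗ Row → F ⊗ Row` which turns the first two factors of
`|a,b,c⟩ ⊗ x` into a new front label. -/
def emb : F3 →ₗ[ℂ] Row →ₗ[ℂ] ARow :=
  mk3 fun a b c => Finsupp.lsingle c ∘ₗ consL (a, b)

lemma emb_bv (a b c : ℕ) (x : Row) :
    emb (bv a b c) x = Finsupp.single c (consL (a, b) x) := by
  simp [emb]

lemma emb_apply (v : F3) (x : Row) (c : ℕ) (p : ℕ × ℕ) (m : List (ℕ × ℕ)) :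
    emb v x c (p :: m) = v (p.1, p.2, c) * x m := by
  induction v using Finsupp.induction_linear with
  | zero => simp
  | add v w hv hw =>
    rw [map_add, LinearMap.add_apply, Finsupp.add_apply, Finsupp.add_apply, hv, hw,
      Finsupp.add_apply, add_mul]
  | single s r =>
    obtain ⟨a', b', c'⟩ := s
    have : Finsupp.single (a', b', c') r = r • bv a' b' c' := by simp [bv]
    rw [this, map_smul, LinearMap.smul_apply, emb_bv]
    by_cases hc : c' = c
    · subst hc
      simp only [Finsupp.smul_apply, Finsupp.single_eq_same, consL_apply, bv,
        Finsupp.single_apply, Prod.ext_iff]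
      split_ifs <;> simp_all
    · simp [bv, hc]

/-- The column `S^(ε)|i,j,k⟩`. -/
def Sv (q : ℂ) (e : Bool) (i j k : ℕ) : F3 :=
  ∑ p ∈ Finset.HasAntidiagonal.antidiagonal (i + j),
    Sg q e p.1 p.2 (j + k - p.2) i j k • bv p.1 p.2 (j + k - p.2)

lemma Sv_false (q : ℂ) (i j k : ℕ) : Sv q false i j k = Rv q i j k := by
  simp [Sv, Sg, Rv]

/-- The conservation law. -/
lemma Sg_conserve {q : ℂ} {e : Bool} {a b c i j k : ℕ} (h : Sg q e a b c i j k ≠ 0) :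
    a + b = i + j ∧ b + c = j + k := by
  cases e
  · simp only [Sg, R3] at h
    by_contra hn
    simp [hn] at h
  · simp only [Sg, L3, if_true] at h
    split_ifs at h <;> first | omega | exact absurd rfl h

lemma Sv_apply (q : ℂ) (e : Bool) (a b c i j k : ℕ) :
    Sv q e i j k (a, b, c) = Sg q e a b c i j k := by
  simp only [Sv, Finsupp.coe_finsetSum, Finset.sum_apply, Finsupp.smul_apply, bv, smul_eq_mul]
  by_cases h : a + b = i + j ∧ b + c = j + k
  · rw [Finset.sum_eq_single (a, b)]
    · have : j + k - b = c := by omega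
      simp [this]
    · rintro ⟨a', b'⟩ _ hne
      rw [Finsupp.single_eq_of_ne, mul_zero]
      rintro h'
      simp only [Prod.mk.injEq] at h'
      exact hne (by simp [h'.1, h'.2.1])
    · intro hn
      exact absurd (by simpa using h.1) hn
  · have h0 : Sg q e a b c i j k = 0 := by
      by_contra hn
      exact h (Sg_conserve hn)
    rw [h0]
    refine Finset.sum_eq_zero ?_
    rintro ⟨a', b'⟩ hm
    by_cases heq : (a', b', j + k - b') = (a, b, c)
    · simp only [Prod.mk.injEq] at heq
      obtain ⟨rfl, rfl, rfl⟩ := heq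
      rw [h0, zero_mul]
    · rw [Finsupp.single_eq_of_ne (Ne.symm heq), mul_zero]

/-- The operator on `F ⊗ Row` which applies `S^(ε)` to a site with label `p` and the auxiliary
space. -/
def siteOp (q : ℂ) (e : Bool) (p : ℕ × ℕ) : ARow →ₗ[ℂ] ARow :=
  Finsupp.lsum ℂ fun k => emb (Sv q e p.1 p.2 k)

@[simp] lemma siteOp_single (q : ℂ) (e : Bool) (p : ℕ × ℕ) (k : ℕ) (x : Row) :
    siteOp q e p (Finsupp.single k x) = emb (Sv q e p.1 p.2 k) x := by
  simp [siteOp]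

/-- The product `S^(ε₁) ⋯ S^(ε_n)` along the auxiliary space, applied to the row `m` and the
auxiliary state `|k⟩`; it is `0` when the length of `m` is not `n`. -/
def rowVec (q : ℂ) : List Bool → ℕ → List (ℕ × ℕ) → ARow
  | [], k, [] => Finsupp.single k (Finsupp.single [] 1)
  | e :: l, k, p :: m => siteOp q e p (rowVec q l k m)
  | _, _, _ => 0

/-- The linear extension of `rowVec` to combinations of rows. -/
def rowOp (q : ℂ) (l : List Bool) (k : ℕ) : Row →ₗ[ℂ] ARow :=
  Finsupp.linearCombination ℂ (rowVec q l k)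

@[simp] lemma rowOp_single (q : ℂ) (l : List Bool) (k : ℕ) (m : List (ℕ × ℕ)) :
    rowOp q l k (Finsupp.single m 1) = rowVec q l k m := by
  simp [rowOp]

lemma rowOp_consL (q : ℂ) (e : Bool) (l : List Bool) (k : ℕ) (p : ℕ × ℕ) (x : Row) :
    rowOp q (e :: l) k (consL p x) = siteOp q e p (rowOp q l k x) := by
  refine LinearMap.congr_fun (f := rowOp q (e :: l) k ∘ₗ consL p)
    (g := siteOp q e p ∘ₗ rowOp q l k) (Row_ext fun m => ?_) x
  simp [rowVec]

/-- The action of an operator on rows on the second factor of `F ⊗ Row`. -/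
def hat (f : Row →ₗ[ℂ] Row) : ARow →ₗ[ℂ] ARow := Finsupp.mapRange.linearMap f

@[simp] lemma hat_single (f : Row →ₗ[ℂ] Row) (k : ℕ) (x : Row) :
    hat f (Finsupp.single k x) = Finsupp.single k (f x) := by
  simp [hat]

@[simp] lemma hat_apply (f : Row →ₗ[ℂ] Row) (w : ARow) (k : ℕ) : hat f w k = f (w k) := by
  simp [hat]

/-- The exclusion rule for rows. -/
def OkL (l : List Bool) (m : List (ℕ × ℕ)) : Prop :=
  List.Forall₂ (fun e p => e = true → p.1 ≤ 1 ∧ p.2 ≤ 1) l m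

/-- The combinations of rows which obey the exclusion rule. -/
def okRows (l : List Bool) : Submodule ℂ Row := Finsupp.supported ℂ ℂ {m | OkL l m}

lemma single_mem_okRows {l : List Bool} {m : List (ℕ × ℕ)} (h : OkL l m) (r : ℂ) :
    Finsupp.single m r ∈ okRows l :=
  Finsupp.single_mem_supported ℂ r h

lemma map_okRows {l l' : List Bool} {f : Row →ₗ[ℂ] Row}
    (h : ∀ m, OkL l m → f (Finsupp.single m 1) ∈ okRows l') {x : Row} (hx : x ∈ okRows l) :
    f x ∈ okRows l' := by
  rw [okRows, Finsupp.supported_eq_span_single] at hx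
  induction hx using Submodule.span_induction with
  | mem x hx =>
    obtain ⟨m, hm, rfl⟩ := hx
    exact h m hm
  | zero => simp
  | add x y _ _ hx hy => rw [map_add]; exact add_mem hx hy
  | smul r x _ hx => rw [map_smul]; exact Submodule.smul_mem _ r hx

lemma consL_mem_okRows {e : Bool} {l : List Bool} {p : ℕ × ℕ}
    (hp : e = true → p.1 ≤ 1 ∧ p.2 ≤ 1) {x : Row} (hx : x ∈ okRows l) :
    consL p x ∈ okRows (e :: l) := by
  refine map_okRows (fun m hm => ?_) hx
  rw [consL_single]
  exact single_mem_okRows (List.Forall₂.cons hp hm) 1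

/-- The sequences `l` and `l'` are equivalent: some invertible operator on rows, compatible with
the exclusion rules, intertwines the row operators of `l` and `l'`. -/
def RowEquiv (q : ℂ) (l l' : List Bool) : Prop :=
  ∃ f g : Row →ₗ[ℂ] Row, (∀ x, g (f x) = x) ∧ (∀ x, f (g x) = x) ∧
    (∀ k x, hat f (rowOp q l k x) = rowOp q l' k (f x)) ∧
    (∀ x ∈ okRows l, f x ∈ okRows l') ∧ (∀ x ∈ okRows l', g x ∈ okRows l)

lemma hat_hat {f g : Row →ₗ[ℂ] Row} (h : ∀ x, g (f x) = x) (w : ARow) : hat g (hat f w) = w := by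
  ext k : 1
  simp [h]

lemma RowEquiv.refl (q : ℂ) (l : List Bool) : RowEquiv q l l :=
  ⟨LinearMap.id, LinearMap.id, fun _ => rfl, fun _ => rfl, fun k x => by ext; simp,
    fun _ h => h, fun _ h => h⟩

lemma RowEquiv.symm {q : ℂ} {l l' : List Bool} (h : RowEquiv q l l') : RowEquiv q l' l := by
  obtain ⟨f, g, h1, h2, h3, h4, h5⟩ := h
  refine ⟨g, f, h2, h1, fun k x => ?_, h5, h4⟩
  have := h3 k (g x)
  rw [h2] at this
  rw [← this, hat_hat h1]

lemma RowEquiv.trans {q : ℂ} {l l' l'' : List Bool} (h : RowEquiv q l l')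
    (h' : RowEquiv q l' l'') : RowEquiv q l l'' := by
  obtain ⟨f, g, h1, h2, h3, h4, h5⟩ := h
  obtain ⟨f', g', h1', h2', h3', h4', h5'⟩ := h'
  refine ⟨f' ∘ₗ f, g ∘ₗ g', fun x => by simp [h1, h1'], fun x => by simp [h2, h2'],
    fun k x => ?_, fun x hx => h4' _ (h4 x hx), fun x hx => h5 _ (h5' x hx)⟩
  rw [LinearMap.comp_apply, ← h3', ← h3]
  ext
  simp

/-- An operator on rows, acting on the tail of a row. -/
def tailOp (f : Row →ₗ[ℂ] Row) : Row →ₗ[ℂ] Row :=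
  Finsupp.linearCombination ℂ fun m =>
    match m with
    | [] => Finsupp.single [] 1
    | p :: m => consL p (f (Finsupp.single m 1))

lemma tailOp_nil (f : Row →ₗ[ℂ] Row) : tailOp f (Finsupp.single [] 1) = Finsupp.single [] 1 := by
  simp [tailOp]

lemma tailOp_consL (f : Row →ₗ[ℂ] Row) (p : ℕ × ℕ) (x : Row) :
    tailOp f (consL p x) = consL p (f x) := by
  refine LinearMap.congr_fun (f := tailOp f ∘ₗ consL p) (g := consL p ∘ₗ f)
    (Row_ext fun m => ?_) x
  simp [tailOp]

lemma tailOp_tailOp {f g : Row →ₗ[ℂ] Row} (h : ∀ x, g (f x) = x) (x : Row) :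
    tailOp g (tailOp f x) = x := by
  refine LinearMap.congr_fun (f := tailOp g ∘ₗ tailOp f) (g := LinearMap.id)
    (Row_ext fun m => ?_) x
  rcases m with _ | ⟨p, m⟩
  · simp [tailOp_nil]
  · rw [← consL_single, LinearMap.comp_apply, tailOp_consL, tailOp_consL, h, LinearMap.id_apply]

lemma hat_tailOp_emb (f : Row →ₗ[ℂ] Row) (v : F3) (x : Row) :
    hat (tailOp f) (emb v x) = emb v (f x) := by
  refine LinearMap.congr_fun (f := hat (tailOp f) ∘ₗ emb.flip x) (g := emb.flip (f x))
    (F3_ext fun a b c => ?_) v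
  simp [emb_bv, tailOp_consL]

lemma hat_tailOp_siteOp (q : ℂ) (e : Bool) (p : ℕ × ℕ) (f : Row →ₗ[ℂ] Row) (w : ARow) :
    hat (tailOp f) (siteOp q e p w) = siteOp q e p (hat f w) := by
  induction w using Finsupp.induction_linear with
  | zero => simp
  | add v w hv hw => simp only [map_add, hv, hw]
  | single k x => simp [hat_tailOp_emb]

lemma tailOp_mem_okRows {e : Bool} {l l' : List Bool} {f : Row →ₗ[ℂ] Row}
    (h : ∀ x ∈ okRows l, f x ∈ okRows l') {x : Row} (hx : x ∈ okRows (e :: l)) :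
    tailOp f x ∈ okRows (e :: l') := by
  refine map_okRows (fun m hm => ?_) hx
  rcases hm with _ | ⟨hp, hm⟩
  rw [← consL_single, tailOp_consL]
  exact consL_mem_okRows hp (h _ (single_mem_okRows hm 1))

lemma RowEquiv.cons {q : ℂ} {l l' : List Bool} (e : Bool) (h : RowEquiv q l l') :
    RowEquiv q (e :: l) (e :: l') := by
  obtain ⟨f, g, h1, h2, h3, h4, h5⟩ := h
  refine ⟨tailOp f, tailOp g, tailOp_tailOp h1, tailOp_tailOp h2, fun k x => ?_,
    fun x hx => tailOp_mem_okRows h4 hx, fun x hx => tailOp_mem_okRows h5 hx⟩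
  refine LinearMap.congr_fun (f := hat (tailOp f) ∘ₗ rowOp q (e :: l) k)
    (g := rowOp q (e :: l') k ∘ₗ tailOp f) (Row_ext fun m => ?_) x
  rcases m with _ | ⟨p, m⟩
  · simp [tailOp_nil, rowVec]
  · rw [← consL_single, LinearMap.comp_apply, LinearMap.comp_apply, tailOp_consL, rowOp_consL,
      rowOp_consL, hat_tailOp_siteOp, h3]

/-! ### Exchanging neighbouring sites of different type -/

lemma Sv_true_00 (q : ℂ) (k : ℕ) : Sv q true 0 0 k = bv 0 0 k := by
  simp [Sv, Sg, L3]

lemma Sv_true_11 (q : ℂ) (k : ℕ) : Sv q true 1 1 k = bv 1 1 k := by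
  have h : 1 + k - 1 = k := by omega
  simp [Sv, Sg, L3, Finset.Nat.antidiagonal_succ, h]

lemma Sv_true_01 (q : ℂ) (k : ℕ) :
    Sv q true 0 1 k = -(q ^ (k + 1)) • bv 0 1 k + bv 1 0 (k + 1) := by
  have h' : 1 + k = k + 1 := by omega
  simp [Sv, Sg, L3, Finset.Nat.antidiagonal_succ, h']

lemma Sv_true_10 (q : ℂ) (k : ℕ) :
    Sv q true 1 0 k = (1 - q ^ (2 * k)) • bv 0 1 (k - 1) + q ^ k • bv 1 0 k := by
  rcases k with _ | k <;>
    simp [Sv, Sg, L3, Finset.Nat.antidiagonal_succ]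

lemma Sv_true_of_one_lt (q : ℂ) {i j : ℕ} (h : 1 < i ∨ 1 < j) (k : ℕ) : Sv q true i j k = 0 := by
  ext ⟨a, b, c⟩
  rw [Sv_apply]
  simp only [Sg, L3, if_true, Finsupp.coe_zero, Pi.zero_apply]
  repeat rw [if_neg (by omega)]

/-- The embedding `F ⊗ F ⊗ F ⊗ Row → F ⊗ Row` which turns the first two factors of
`|a,b,c⟩ ⊗ x` into the second label of a row with front label `f`. -/
def emb2 (f : ℕ × ℕ) : F3 →ₗ[ℂ] Row →ₗ[ℂ] ARow :=
  mk3 fun a b c => Finsupp.lsingle c ∘ₗ consL f ∘ₗ consL (a, b)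

lemma emb2_bv (f : ℕ × ℕ) (a b c : ℕ) (x : Row) :
    emb2 f (bv a b c) x = Finsupp.single c (consL f (consL (a, b) x)) := by
  simp [emb2]

/-- `k₃`. -/
def opK3 (q : ℂ) : F3 →ₗ[ℂ] F3 := mk3 fun a b c => q ^ c • bv a b c

/-- `a₃⁺`. -/
def opUp3 : F3 →ₗ[ℂ] F3 := mk3 fun a b c => bv a b (c + 1)

/-- `a₃⁻`. -/
def opDn3 (q : ℂ) : F3 →ₗ[ℂ] F3 := mk3 fun a b c => (1 - q ^ (2 * c)) • bv a b (c - 1)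

section SiteTrue

variable (q : ℂ)

lemma siteOp_true_00 (v : F3) (x : Row) : siteOp q true (0, 0) (emb v x) = emb2 (0, 0) v x := by
  refine LinearMap.congr_fun (f := siteOp q true (0, 0) ∘ₗ emb.flip x)
    (g := (emb2 (0, 0)).flip x) (F3_ext fun a b c => ?_) v
  simp [emb_bv, emb2_bv, Sv_true_00]

lemma siteOp_true_11 (v : F3) (x : Row) : siteOp q true (1, 1) (emb v x) = emb2 (1, 1) v x := by
  refine LinearMap.congr_fun (f := siteOp q true (1, 1) ∘ₗ emb.flip x)
    (g := (emb2 (1, 1)).flip x) (F3_ext fun a b c => ?_) v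
  simp [emb_bv, emb2_bv, Sv_true_11]

lemma siteOp_true_01 (v : F3) (x : Row) :
    siteOp q true (0, 1) (emb v x) = -q • emb2 (0, 1) (opK3 q v) x + emb2 (1, 0) (opUp3 v) x := by
  refine LinearMap.congr_fun (f := siteOp q true (0, 1) ∘ₗ emb.flip x)
    (g := -q • (emb2 (0, 1)).flip x ∘ₗ opK3 q + (emb2 (1, 0)).flip x ∘ₗ opUp3)
    (F3_ext fun a b c => ?_) v
  simp only [LinearMap.comp_apply, LinearMap.flip_apply, emb_bv, siteOp_single, Sv_true_01,
    map_add, map_smul, LinearMap.add_apply, LinearMap.smul_apply, opK3, opUp3, mk3_bv, emb2_bv,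
    smul_smul]
  congr 2
  ring

lemma siteOp_true_10 (v : F3) (x : Row) :
    siteOp q true (1, 0) (emb v x) = emb2 (0, 1) (opDn3 q v) x + emb2 (1, 0) (opK3 q v) x := by
  refine LinearMap.congr_fun (f := siteOp q true (1, 0) ∘ₗ emb.flip x)
    (g := (emb2 (0, 1)).flip x ∘ₗ opDn3 q + (emb2 (1, 0)).flip x ∘ₗ opK3 q)
    (F3_ext fun a b c => ?_) v
  simp [emb_bv, emb2_bv, Sv_true_10, opK3, opDn3]

lemma siteOp_true_of_one_lt {p : ℕ × ℕ} (h : 1 < p.1 ∨ 1 < p.2) (w : ARow) :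
    siteOp q true p w = 0 := by
  induction w using Finsupp.induction_linear with
  | zero => simp
  | add v w hv hw => simp only [map_add, hv, hw, zero_add]
  | single k x => simp [Sv_true_of_one_lt q h]

end SiteTrue

/-- Images of the basis rows under the operator `Tr₁(L₁₂₄ L₁₃₅)` which exchanges a front site with
`ε = 1` and a second site with `ε = 0`. Rows which violate the exclusion rule at the front
site are sent to the row with the two labels exchanged, so that the operator is invertible. -/
def exchVec (q : ℂ) : List (ℕ × ℕ) → Row
  | (0, 0) :: (a, b) :: m => (1 + q ^ (a + b)) • Finsupp.single ((a, b) :: (0, 0) :: m) 1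
  | (1, 1) :: (a, b) :: m => (1 + q ^ (a + b + 2)) • Finsupp.single ((a, b) :: (1, 1) :: m) 1
  | (1, 0) :: (a, b) :: m => (q ^ b - q ^ (a + 1)) • Finsupp.single ((a, b) :: (1, 0) :: m) 1 +
      (1 - q ^ (2 * b)) • Finsupp.single ((a + 1, b - 1) :: (0, 1) :: m) 1
  | (0, 1) :: (a, b) :: m => (q ^ a - q ^ (b + 1)) • Finsupp.single ((a, b) :: (0, 1) :: m) 1 +
      (1 - q ^ (2 * a)) • Finsupp.single ((a - 1, b + 1) :: (1, 0) :: m) 1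
  | f :: g :: m => Finsupp.single (g :: f :: m) 1
  | m => Finsupp.single m 1

/-- Images of the basis rows under the inverse of the operator described by `exchVec`. -/
def exchVecInv (q : ℂ) : List (ℕ × ℕ) → Row
  | (a, b) :: (0, 0) :: m => (1 + q ^ (a + b))⁻¹ • Finsupp.single ((0, 0) :: (a, b) :: m) 1
  | (a, b) :: (1, 1) :: m => (1 + q ^ (a + b + 2))⁻¹ • Finsupp.single ((1, 1) :: (a, b) :: m) 1
  | (a, b) :: (1, 0) :: m => ((1 - q ^ (a + b + 1)) ^ 2)⁻¹ •
      ((q ^ b - q ^ (a + 1)) • Finsupp.single ((1, 0) :: (a, b) :: m) 1 +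
        (1 - q ^ (2 * b)) • Finsupp.single ((0, 1) :: (a + 1, b - 1) :: m) 1)
  | (a, b) :: (0, 1) :: m => ((1 - q ^ (a + b + 1)) ^ 2)⁻¹ •
      ((q ^ a - q ^ (b + 1)) • Finsupp.single ((0, 1) :: (a, b) :: m) 1 +
        (1 - q ^ (2 * a)) • Finsupp.single ((1, 0) :: (a - 1, b + 1) :: m) 1)
  | g :: f :: m => Finsupp.single (f :: g :: m) 1
  | m => Finsupp.single m 1

/-- The linear extension of `exchVec`. -/
def exch (q : ℂ) : Row →ₗ[ℂ] Row := Finsupp.linearCombination ℂ (exchVec q)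

/-- The linear extension of `exchVecInv`. -/
def exchInv (q : ℂ) : Row →ₗ[ℂ] Row := Finsupp.linearCombination ℂ (exchVecInv q)

lemma exch_single (q : ℂ) (m : List (ℕ × ℕ)) : exch q (Finsupp.single m 1) = exchVec q m := by
  simp [exch]

lemma exchInv_single (q : ℂ) (m : List (ℕ × ℕ)) :
    exchInv q (Finsupp.single m 1) = exchVecInv q m := by
  simp [exchInv]

lemma label_cases (f : ℕ × ℕ) :
    f = (0, 0) ∨ f = (1, 1) ∨ f = (1, 0) ∨ f = (0, 1) ∨ (1 < f.1 ∨ 1 < f.2) := by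
  obtain ⟨a, b⟩ := f
  simp only [Prod.mk.injEq]
  omega

lemma exchVec_of_one_lt (q : ℂ) {f : ℕ × ℕ} (h : 1 < f.1 ∨ 1 < f.2) (g : ℕ × ℕ)
    (m : List (ℕ × ℕ)) : exchVec q (f :: g :: m) = Finsupp.single (g :: f :: m) 1 := by
  obtain ⟨a, b⟩ := f
  rcases a with _ | _ | a <;> rcases b with _ | _ | b <;> first | rfl | simp at h

lemma exchVecInv_of_one_lt (q : ℂ) {f : ℕ × ℕ} (h : 1 < f.1 ∨ 1 < f.2) (g : ℕ × ℕ)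
    (m : List (ℕ × ℕ)) : exchVecInv q (g :: f :: m) = Finsupp.single (f :: g :: m) 1 := by
  obtain ⟨a, b⟩ := f
  rcases a with _ | _ | a <;> rcases b with _ | _ | b <;> first | rfl | simp at h

section Inverse

variable {q : ℂ} (hq : ∀ k : ℕ, k ≠ 0 → q ^ k ≠ 1)
include hq

lemma one_add_ne (k : ℕ) : 1 + q ^ k ≠ 0 := by
  intro h
  have h1 : q ^ k = -1 := by linear_combination h
  rcases Nat.eq_zero_or_pos k with rfl | hk
  · norm_num at h1
  · exact hq (k * 2) (by omega) (by rw [pow_mul, h1]; norm_num)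

lemma exchInv_exch (x : Row) : exchInv q (exch q x) = x := by
  refine LinearMap.congr_fun (f := exchInv q ∘ₗ exch q) (g := LinearMap.id)
    (Row_ext fun m => ?_) x
  rw [LinearMap.comp_apply, exch_single, LinearMap.id_apply]
  rcases m with _ | ⟨f, _ | ⟨⟨a, b⟩, m⟩⟩
  · simp [exchVec, exchInv_single, exchVecInv]
  · simp [exchVec, exchInv_single, exchVecInv]
  rcases label_cases f with rfl | rfl | rfl | rfl | h
  · rw [exchVec, map_smul, exchInv_single, exchVecInv, smul_smul,
      mul_inv_cancel₀ (one_add_ne hq _), one_smul]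
  · rw [exchVec, map_smul, exchInv_single, exchVecInv, smul_smul,
      mul_inv_cancel₀ (one_add_ne hq _), one_smul]
  · have h1 := one_sub_ne hq (a + b + 1) (by omega)
    rcases b with _ | b
    · simp only [exchVec, map_add, map_smul, exchInv_single, exchVecInv]
      simp only [mul_zero, pow_zero, sub_self, zero_smul, add_zero, smul_smul] at h1 ⊢
      match_scalars <;> first | ring1 | field_simp
    · have e : a + 1 + b + 1 = a + (b + 1) + 1 := by ring
      simp only [exchVec, map_add, map_smul, exchInv_single, exchVecInv, Nat.add_sub_cancel, e]
      match_scalars <;> field_simp <;> ring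
  · have h1 := one_sub_ne hq (a + b + 1) (by omega)
    rcases a with _ | a
    · simp only [exchVec, map_add, map_smul, exchInv_single, exchVecInv]
      simp only [mul_zero, pow_zero, sub_self, zero_smul, add_zero, zero_add, smul_smul] at h1 ⊢
      match_scalars <;> first | ring1 | field_simp
    · have e : a + (b + 1) + 1 = a + 1 + b + 1 := by ring
      simp only [exchVec, map_add, map_smul, exchInv_single, exchVecInv, Nat.add_sub_cancel, e]
      match_scalars <;> field_simp <;> ring
  · rw [exchVec_of_one_lt q h, exchInv_single, exchVecInv_of_one_lt q h]

lemma exch_exchInv (x : Row) : exch q (exchInv q x) = x := by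
  refine LinearMap.congr_fun (f := exch q ∘ₗ exchInv q) (g := LinearMap.id)
    (Row_ext fun m => ?_) x
  rw [LinearMap.comp_apply, exchInv_single, LinearMap.id_apply]
  rcases m with _ | ⟨⟨a, b⟩, _ | ⟨f, m⟩⟩
  · simp [exchVec, exch_single, exchVecInv]
  · simp [exchVec, exch_single, exchVecInv]
  rcases label_cases f with rfl | rfl | rfl | rfl | h
  · rw [exchVecInv, map_smul, exch_single, exchVec, smul_smul,
      inv_mul_cancel₀ (one_add_ne hq _), one_smul]
  · rw [exchVecInv, map_smul, exch_single, exchVec, smul_smul,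
      inv_mul_cancel₀ (one_add_ne hq _), one_smul]
  · have h1 := one_sub_ne hq (a + b + 1) (by omega)
    rcases b with _ | b
    · simp only [exchVec, map_add, map_smul, exch_single, exchVecInv]
      simp only [mul_zero, pow_zero, sub_self, zero_smul, add_zero, smul_smul] at h1 ⊢
      match_scalars <;> first | ring1 | field_simp
    · simp only [exchVec, map_add, map_smul, exch_single, exchVecInv, Nat.add_sub_cancel]
      match_scalars <;> field_simp <;> ring
  · have h1 := one_sub_ne hq (a + b + 1) (by omega)
    rcases a with _ | a
    · simp only [exchVec, map_add, map_smul, exch_single, exchVecInv]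
      simp only [mul_zero, pow_zero, sub_self, zero_smul, add_zero, zero_add, smul_smul] at h1 ⊢
      match_scalars <;> first | ring1 | field_simp
    · simp only [exchVec, map_add, map_smul, exch_single, exchVecInv, Nat.add_sub_cancel]
      match_scalars <;> field_simp <;> ring
  · rw [exchVecInv_of_one_lt q h, exch_single, exchVec_of_one_lt q h]

end Inverse

section Exchange

variable (q : ℂ)

lemma exch_consL_00 (a b : ℕ) (x : Row) : exch q (consL (0, 0) (consL (a, b) x)) =
    (1 + q ^ (a + b)) • consL (a, b) (consL (0, 0) x) := by
  refine LinearMap.congr_fun (f := exch q ∘ₗ consL (0, 0) ∘ₗ consL (a, b))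
    (g := (1 + q ^ (a + b)) • consL (a, b) ∘ₗ consL (0, 0)) (Row_ext fun m => ?_) x
  simp only [LinearMap.comp_apply, LinearMap.smul_apply, consL_single, exch_single, exchVec]

lemma exch_consL_11 (a b : ℕ) (x : Row) : exch q (consL (1, 1) (consL (a, b) x)) =
    (1 + q ^ (a + b + 2)) • consL (a, b) (consL (1, 1) x) := by
  refine LinearMap.congr_fun (f := exch q ∘ₗ consL (1, 1) ∘ₗ consL (a, b))
    (g := (1 + q ^ (a + b + 2)) • consL (a, b) ∘ₗ consL (1, 1)) (Row_ext fun m => ?_) x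
  simp only [LinearMap.comp_apply, LinearMap.smul_apply, consL_single, exch_single, exchVec]

lemma exch_consL_10 (a b : ℕ) (x : Row) : exch q (consL (1, 0) (consL (a, b) x)) =
    (q ^ b - q ^ (a + 1)) • consL (a, b) (consL (1, 0) x) +
      (1 - q ^ (2 * b)) • consL (a + 1, b - 1) (consL (0, 1) x) := by
  refine LinearMap.congr_fun (f := exch q ∘ₗ consL (1, 0) ∘ₗ consL (a, b))
    (g := (q ^ b - q ^ (a + 1)) • consL (a, b) ∘ₗ consL (1, 0) +
      (1 - q ^ (2 * b)) • consL (a + 1, b - 1) ∘ₗ consL (0, 1)) (Row_ext fun m => ?_) x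
  simp only [LinearMap.comp_apply, LinearMap.add_apply, LinearMap.smul_apply, consL_single,
    exch_single, exchVec]

lemma exch_consL_01 (a b : ℕ) (x : Row) : exch q (consL (0, 1) (consL (a, b) x)) =
    (q ^ a - q ^ (b + 1)) • consL (a, b) (consL (0, 1) x) +
      (1 - q ^ (2 * a)) • consL (a - 1, b + 1) (consL (1, 0) x) := by
  refine LinearMap.congr_fun (f := exch q ∘ₗ consL (0, 1) ∘ₗ consL (a, b))
    (g := (q ^ a - q ^ (b + 1)) • consL (a, b) ∘ₗ consL (0, 1) +
      (1 - q ^ (2 * a)) • consL (a - 1, b + 1) ∘ₗ consL (1, 0)) (Row_ext fun m => ?_) x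
  simp only [LinearMap.comp_apply, LinearMap.add_apply, LinearMap.smul_apply, consL_single,
    exch_single, exchVec]

lemma hat_exch_siteOp_00 (v : F3) (x : Row) : hat (exch q) (siteOp q true (0, 0) (emb v x)) =
    emb v (consL (0, 0) x) + emb (opK12 q v) (consL (0, 0) x) := by
  rw [siteOp_true_00]
  refine LinearMap.congr_fun (f := hat (exch q) ∘ₗ (emb2 (0, 0)).flip x)
    (g := emb.flip (consL (0, 0) x) + emb.flip (consL (0, 0) x) ∘ₗ opK12 q) (F3_ext fun a b c => ?_) v
  simp only [LinearMap.comp_apply, LinearMap.flip_apply, emb2_bv, hat_single, exch_consL_00,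
    LinearMap.add_apply, opK12, mk3_bv, map_smul,
    emb_bv, ← Finsupp.smul_single, add_smul, one_smul, Finsupp.single_add]

lemma hat_exch_siteOp_11 (v : F3) (x : Row) : hat (exch q) (siteOp q true (1, 1) (emb v x)) =
    emb v (consL (1, 1) x) + q ^ 2 • emb (opK12 q v) (consL (1, 1) x) := by
  rw [siteOp_true_11]
  refine LinearMap.congr_fun (f := hat (exch q) ∘ₗ (emb2 (1, 1)).flip x)
    (g := emb.flip (consL (1, 1) x) + q ^ 2 • emb.flip (consL (1, 1) x) ∘ₗ opK12 q)
    (F3_ext fun a b c => ?_) v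
  simp only [LinearMap.comp_apply, LinearMap.flip_apply, emb2_bv, hat_single, exch_consL_11,
    LinearMap.add_apply, LinearMap.smul_apply, opK12, mk3_bv, map_smul,
    emb_bv, ← Finsupp.smul_single]
  module

lemma hat_exch_siteOp_10 (v : F3) (x : Row) : hat (exch q) (siteOp q true (1, 0) (emb v x)) =
    emb (opK23 q v + opC q v) (consL (1, 0) x) +
      emb (opQ q v + -q • opB q v) (consL (0, 1) x) := by
  rw [siteOp_true_10]
  refine LinearMap.congr_fun
    (f := hat (exch q) ∘ₗ ((emb2 (0, 1)).flip x ∘ₗ opDn3 q + (emb2 (1, 0)).flip x ∘ₗ opK3 q))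
    (g := emb.flip (consL (1, 0) x) ∘ₗ (opK23 q + opC q) +
      emb.flip (consL (0, 1) x) ∘ₗ (opQ q + -q • opB q)) (F3_ext fun a b c => ?_) v
  simp only [LinearMap.comp_apply, LinearMap.flip_apply, emb2_bv, hat_single, exch_consL_10,
    exch_consL_01, LinearMap.add_apply, LinearMap.smul_apply, opK23, opC, opQ,
    opB, opK3, opDn3, mk3_bv, map_add, map_sub, map_smul,
    emb_bv, ← Finsupp.smul_single, Finsupp.single_add]
  module

lemma hat_exch_siteOp_01 (v : F3) (x : Row) : hat (exch q) (siteOp q true (0, 1) (emb v x)) =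
    emb (q ^ 2 • opK23 q v + opD q v) (consL (0, 1) x) +
      emb (opA q v + -q • opP q v) (consL (1, 0) x) := by
  rw [siteOp_true_01]
  refine LinearMap.congr_fun
    (f := hat (exch q) ∘ₗ (-q • (emb2 (0, 1)).flip x ∘ₗ opK3 q + (emb2 (1, 0)).flip x ∘ₗ opUp3))
    (g := emb.flip (consL (0, 1) x) ∘ₗ (q ^ 2 • opK23 q + opD q) +
      emb.flip (consL (1, 0) x) ∘ₗ (opA q + -q • opP q)) (F3_ext fun a b c => ?_) v
  simp only [LinearMap.comp_apply, LinearMap.flip_apply, emb2_bv, hat_single, exch_consL_10,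
    exch_consL_01, LinearMap.add_apply, LinearMap.smul_apply, opK23, opD, opA,
    opP, opK3, opUp3, mk3_bv, map_add, map_sub, map_smul,
    emb_bv, ← Finsupp.smul_single, Finsupp.single_add]
  module

end Exchange

lemma siteOp_false_single (q : ℂ) (i j k : ℕ) (x : Row) :
    siteOp q false (i, j) (Finsupp.single k x) = emb (Rv q i j k) x := by
  rw [siteOp_single, Sv_false]

lemma siteOp_true_single_00 (q : ℂ) (k : ℕ) (x : Row) :
    siteOp q true (0, 0) (Finsupp.single k x) = Finsupp.single k (consL (0, 0) x) := by
  rw [siteOp_single, Sv_true_00, emb_bv]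

lemma siteOp_true_single_11 (q : ℂ) (k : ℕ) (x : Row) :
    siteOp q true (1, 1) (Finsupp.single k x) = Finsupp.single k (consL (1, 1) x) := by
  rw [siteOp_single, Sv_true_11, emb_bv]

lemma siteOp_true_single_01 (q : ℂ) (k : ℕ) (x : Row) :
    siteOp q true (0, 1) (Finsupp.single k x) =
      -(q ^ (k + 1)) • Finsupp.single k (consL (0, 1) x) +
        Finsupp.single (k + 1) (consL (1, 0) x) := by
  rw [siteOp_single, Sv_true_01, map_add, map_smul, LinearMap.add_apply, LinearMap.smul_apply,
    emb_bv, emb_bv]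

lemma siteOp_true_single_10 (q : ℂ) (k : ℕ) (x : Row) :
    siteOp q true (1, 0) (Finsupp.single k x) =
      (1 - q ^ (2 * k)) • Finsupp.single (k - 1) (consL (0, 1) x) +
        q ^ k • Finsupp.single k (consL (1, 0) x) := by
  rw [siteOp_single, Sv_true_10, map_add, map_smul, map_smul, LinearMap.add_apply,
    LinearMap.smul_apply, LinearMap.smul_apply, emb_bv, emb_bv]

section Swap

variable {q : ℂ} (hq0 : q ≠ 0) (hq : ∀ k : ℕ, k ≠ 0 → q ^ k ≠ 1)
include hq0 hq

/-- The exchange relation: a form of the tetrahedron equation of type `RLLL` in which one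
space has been traced out. -/
lemma hat_exch_siteOp (f g : ℕ × ℕ) (m : List (ℕ × ℕ)) (l : List Bool) (k : ℕ) :
    hat (exch q) (siteOp q true f (siteOp q false g (rowVec q l k m))) =
      rowOp q (false :: true :: l) k (exchVec q (f :: g :: m)) := by
  obtain ⟨i, j⟩ := g
  have key : ∀ (p : ℕ × ℕ) (p' : ℕ × ℕ),
      rowOp q (false :: true :: l) k (Finsupp.single (p :: p' :: m) 1) =
        siteOp q false p (siteOp q true p' (rowVec q l k m)) := by
    intro p p'
    simp [rowVec]
  rcases label_cases f with rfl | rfl | rfl | rfl | h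
  · rw [exchVec, map_smul, key]
    generalize rowVec q l k m = w
    induction w using Finsupp.induction_linear with
    | zero => simp
    | add v w hv hw => simp only [map_add, smul_add, hv, hw]
    | single k x =>
      rw [siteOp_true_single_00, siteOp_false_single, siteOp_false_single, hat_exch_siteOp_00,
        opK12_Rv hq0 hq]
      simp only [map_smul, LinearMap.smul_apply]
      module
  · rw [exchVec, map_smul, key]
    generalize rowVec q l k m = w
    induction w using Finsupp.induction_linear with
    | zero => simp
    | add v w hv hw => simp only [map_add, smul_add, hv, hw]
    | single k x =>
      rw [siteOp_true_single_11, siteOp_false_single, siteOp_false_single, hat_exch_siteOp_11,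
        opK12_Rv hq0 hq]
      simp only [map_smul, LinearMap.smul_apply]
      module
  · rw [exchVec, map_add, map_smul, map_smul, key, key]
    generalize rowVec q l k m = w
    induction w using Finsupp.induction_linear with
    | zero => simp
    | add v w hv hw =>
      simp only [map_add, smul_add, hv, hw]
      abel
    | single k x =>
      rw [siteOp_true_single_10, siteOp_true_single_01, siteOp_false_single, hat_exch_siteOp_10,
        opK23_Rv hq0 hq, opC_Rv hq0 hq, opQ_Rv hq0 hq, opB_Rv hq0 hq]
      simp only [map_add, map_smul, LinearMap.add_apply, LinearMap.smul_apply,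
        siteOp_false_single]
      module
  · rw [exchVec, map_add, map_smul, map_smul, key, key]
    generalize rowVec q l k m = w
    induction w using Finsupp.induction_linear with
    | zero => simp
    | add v w hv hw =>
      simp only [map_add, smul_add, hv, hw]
      abel
    | single k x =>
      rw [siteOp_true_single_10, siteOp_true_single_01, siteOp_false_single, hat_exch_siteOp_01,
        opK23_Rv hq0 hq, opD_Rv hq0 hq, opP_Rv hq0 hq, opA_Rv hq0 hq]
      simp only [map_add, map_smul, LinearMap.add_apply, LinearMap.smul_apply,
        siteOp_false_single]
      module
  · rw [exchVec_of_one_lt q h, key, siteOp_true_of_one_lt q h, siteOp_true_of_one_lt q h, map_zero,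
      map_zero]

lemma rowEquiv_swap (l : List Bool) : RowEquiv q (true :: false :: l) (false :: true :: l) := by
  refine ⟨exch q, exchInv q, exchInv_exch hq, exch_exchInv hq, fun k x => ?_,
    fun x hx => map_okRows (fun m hm => ?_) hx, fun x hx => map_okRows (fun m hm => ?_) hx⟩
  · refine LinearMap.congr_fun (f := hat (exch q) ∘ₗ rowOp q (true :: false :: l) k)
      (g := rowOp q (false :: true :: l) k ∘ₗ exch q) (Row_ext fun m => ?_) x
    rw [LinearMap.comp_apply, LinearMap.comp_apply, exch_single, rowOp_single]
    rcases m with _ | ⟨f, _ | ⟨g, m⟩⟩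
    · simp [exchVec, rowVec]
    · simp [exchVec, rowVec]
    · exact hat_exch_siteOp hq0 hq f g m l k
  · rcases m with _ | ⟨f, _ | ⟨⟨a, b⟩, m⟩⟩
    · simp [OkL] at hm
    · simp [OkL] at hm
    obtain ⟨hf, hm⟩ : (f.1 ≤ 1 ∧ f.2 ≤ 1) ∧ OkL l m := by simpa [OkL] using hm
    have ok : ∀ (p p' : ℕ × ℕ), p'.1 ≤ 1 ∧ p'.2 ≤ 1 →
        Finsupp.single (p :: p' :: m) (1 : ℂ) ∈ okRows (false :: true :: l) := fun p p' h =>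
      single_mem_okRows (List.Forall₂.cons (by simp) (List.Forall₂.cons (fun _ => h) hm)) 1
    rw [exch_single]
    rcases label_cases f with rfl | rfl | rfl | rfl | h
    · exact Submodule.smul_mem _ _ (ok _ _ (by simp))
    · exact Submodule.smul_mem _ _ (ok _ _ (by simp))
    · exact add_mem (Submodule.smul_mem _ _ (ok _ _ (by simp)))
        (Submodule.smul_mem _ _ (ok _ _ (by simp)))
    · exact add_mem (Submodule.smul_mem _ _ (ok _ _ (by simp)))
        (Submodule.smul_mem _ _ (ok _ _ (by simp)))
    · omega
  · rcases m with _ | ⟨⟨a, b⟩, _ | ⟨f, m⟩⟩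
    · simp [OkL] at hm
    · simp [OkL] at hm
    obtain ⟨hf, hm⟩ : (f.1 ≤ 1 ∧ f.2 ≤ 1) ∧ OkL l m := by simpa [OkL] using hm
    have ok : ∀ (p p' : ℕ × ℕ), p'.1 ≤ 1 ∧ p'.2 ≤ 1 →
        Finsupp.single (p' :: p :: m) (1 : ℂ) ∈ okRows (true :: false :: l) := fun p p' h =>
      single_mem_okRows (List.Forall₂.cons (fun _ => h) (List.Forall₂.cons (by simp) hm)) 1
    rw [exchInv_single]
    rcases label_cases f with rfl | rfl | rfl | rfl | h
    · exact Submodule.smul_mem _ _ (ok _ _ (by simp))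
    · exact Submodule.smul_mem _ _ (ok _ _ (by simp))
    · exact Submodule.smul_mem _ _ (add_mem (Submodule.smul_mem _ _ (ok _ _ (by simp)))
        (Submodule.smul_mem _ _ (ok _ _ (by simp))))
    · exact Submodule.smul_mem _ _ (add_mem (Submodule.smul_mem _ _ (ok _ _ (by simp)))
        (Submodule.smul_mem _ _ (ok _ _ (by simp))))
    · omega

lemma RowEquiv.of_perm {l l' : List Bool} (h : l.Perm l') : RowEquiv q l l' := by
  induction h with
  | nil => exact RowEquiv.refl q []
  | cons e _ ih => exact ih.cons e
  | swap x y l =>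
    cases x <;> cases y
    · exact RowEquiv.refl q _
    · exact rowEquiv_swap hq0 hq l
    · exact (rowEquiv_swap hq0 hq l).symm
    · exact RowEquiv.refl q _
  | trans _ _ ih ih' => exact ih.trans ih'

end Swap

/-! ### Matrix elements of row operators -/

lemma siteOp_apply (q : ℂ) (e : Bool) (p : ℕ × ℕ) (w : ARow) (c : ℕ) (p' : ℕ × ℕ)
    (m : List (ℕ × ℕ)) :
    siteOp q e p w c (p' :: m) =
      Sg q e p'.1 p'.2 c p.1 p.2 (p'.2 + c - p.2) * w (p'.2 + c - p.2) m := by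
  induction w using Finsupp.induction_linear with
  | zero => simp
  | add v w hv hw => rw [map_add, Finsupp.add_apply, Finsupp.add_apply, hv, hw, Finsupp.add_apply,
      Finsupp.add_apply, mul_add]
  | single k x =>
    rw [siteOp_single, emb_apply, Sv_apply]
    by_cases h : k = p'.2 + c - p.2
    · subst h
      rw [Finsupp.single_eq_same]
    · rw [Finsupp.single_eq_of_ne (Ne.symm h), Finsupp.coe_zero, Pi.zero_apply, mul_zero]
      by_cases h0 : Sg q e p'.1 p'.2 c p.1 p.2 k = 0
      · rw [h0, zero_mul]
      · have := (Sg_conserve h0).2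
        omega

lemma emb_apply_nil (v : F3) (x : Row) (c : ℕ) : emb v x c [] = 0 := by
  induction v using Finsupp.induction_linear with
  | zero => simp
  | add v w hv hw =>
    rw [map_add, LinearMap.add_apply, Finsupp.add_apply, Finsupp.add_apply, hv, hw, add_zero]
  | single s r =>
    obtain ⟨a', b', c'⟩ := s
    have : Finsupp.single (a', b', c') r = r • bv a' b' c' := by simp [bv]
    rw [this, map_smul, LinearMap.smul_apply, emb_bv, Finsupp.smul_apply, Finsupp.smul_apply]
    have h0 : consL (a', b') x [] = 0 := by
      induction x using Finsupp.induction_linear with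
      | zero => simp
      | add x y hx hy => rw [map_add, Finsupp.add_apply, hx, hy, add_zero]
      | single m r => simp
    by_cases hc : c' = c
    · subst hc
      rw [Finsupp.single_eq_same, h0, smul_zero]
    · rw [Finsupp.single_eq_of_ne (Ne.symm hc), Finsupp.coe_zero, Pi.zero_apply, smul_zero]

lemma siteOp_apply_nil (q : ℂ) (e : Bool) (p : ℕ × ℕ) (w : ARow) (c : ℕ) :
    siteOp q e p w c [] = 0 := by
  induction w using Finsupp.induction_linear with
  | zero => simp
  | add v w hv hw => rw [map_add, Finsupp.add_apply, Finsupp.add_apply, hv, hw, add_zero]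
  | single k x => rw [siteOp_single, emb_apply_nil]

/-- The matrix elements of `L` vanish unless the exclusion rule holds for the output labels. -/
lemma Sg_true_le {q : ℂ} {a b c i j k : ℕ} (h : Sg q true a b c i j k ≠ 0) : a ≤ 1 ∧ b ≤ 1 := by
  simp only [Sg, L3, if_true] at h
  split_ifs at h <;> first | omega | exact absurd rfl h

lemma okL_of_rowVec_ne {q : ℂ} {l : List Bool} {k c : ℕ} {m m' : List (ℕ × ℕ)}
    (h : rowVec q l k m c m' ≠ 0) : OkL l m' := by
  induction l generalizing m m' c with
  | nil =>
    rcases m with _ | ⟨p, m⟩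
    · rcases m' with _ | ⟨p', m'⟩
      · exact List.Forall₂.nil
      · by_cases hc : k = c
        · subst hc
          simp [rowVec] at h
        · simp [rowVec, Finsupp.single_eq_of_ne (Ne.symm hc)] at h
    · simp [rowVec] at h
  | cons e l ih =>
    rcases m with _ | ⟨p, m⟩
    · simp [rowVec] at h
    · rcases m' with _ | ⟨p', m'⟩
      · exact absurd (siteOp_apply_nil q e p _ c) h
      · rw [rowVec, siteOp_apply] at h
        refine List.Forall₂.cons ?_ (ih (right_ne_zero_of_mul h))
        rintro rfl
        exact Sg_true_le (left_ne_zero_of_mul h)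

lemma rowVec_mem_okRows (q : ℂ) (l : List Bool) (k c : ℕ) (m : List (ℕ × ℕ)) :
    rowVec q l k m c ∈ okRows l := by
  rw [okRows, Finsupp.mem_supported]
  intro m' hm'
  exact okL_of_rowVec_ne (Finsupp.mem_support_iff.mp hm')

/-- By conservation, the auxiliary occupation number grows from left to right by at most the
total occupation number of the row. -/
lemma le_of_rowVec_ne {q : ℂ} {l : List Bool} {k c : ℕ} {m m' : List (ℕ × ℕ)}
    (h : rowVec q l k m c m' ≠ 0) : k ≤ c + (m.map fun p => p.1 + p.2).sum := by
  induction l generalizing m m' c with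
  | nil =>
    rcases m with _ | ⟨p, m⟩
    · by_cases hc : k = c
      · omega
      · simp [rowVec, Finsupp.single_eq_of_ne (Ne.symm hc)] at h
    · simp [rowVec] at h
  | cons e l ih =>
    rcases m with _ | ⟨p, m⟩
    · simp [rowVec] at h
    · rcases m' with _ | ⟨p', m'⟩
      · exact absurd (siteOp_apply_nil q e p _ c) h
      · rw [rowVec, siteOp_apply] at h
        have h1 := ih (right_ne_zero_of_mul h)
        have h2 := (Sg_conserve (left_ne_zero_of_mul h)).1
        simp only [List.map_cons, List.sum_cons]
        omega

/-- `y` lists the occupation numbers of the auxiliary space along a row with output labels `b`,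
input labels `j`, left end `c` and right end `k`. -/
def IsPath {n : ℕ} (b j : Fin n → ℕ) (c k : ℕ) (y : Fin (n + 1) → ℕ) : Prop :=
  y 0 = c ∧ y (Fin.last n) = k ∧ ∀ t, b t + y t.castSucc = j t + y t.succ

lemma IsPath.unique {n : ℕ} {b j : Fin n → ℕ} {c k k' : ℕ} {y y' : Fin (n + 1) → ℕ}
    (h : IsPath b j c k y) (h' : IsPath b j c k' y') : y = y' := by
  funext v
  induction v using Fin.induction with
  | zero => rw [h.1, h'.1]
  | succ t ih =>
    have h1 := h.2.2 t
    have h2 := h'.2.2 t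
    omega

/-- The weight of the auxiliary path `y`. -/
def pathProd (q : ℂ) {n : ℕ} (ε : Fin n → Bool) (a b i j : Fin n → ℕ) (y : Fin (n + 1) → ℕ) : ℂ :=
  ∏ t : Fin n, Sg q (ε t) (a t) (b t) (y t.castSucc) (i t) (j t) (y t.succ)

lemma conserve_of_pathProd_ne {q : ℂ} {n : ℕ} {ε : Fin n → Bool} {a b i j : Fin n → ℕ}
    {y : Fin (n + 1) → ℕ} (h : pathProd q ε a b i j y ≠ 0) (t : Fin n) :
    a t + b t = i t + j t ∧ b t + y t.castSucc = j t + y t.succ :=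
  Sg_conserve (Finset.prod_ne_zero_iff.mp h t (Finset.mem_univ t))

/-- The row with labels `(i_t, j_t)`. -/
def rowOf {n : ℕ} (i j : Fin n → ℕ) : List (ℕ × ℕ) := List.ofFn fun t => (i t, j t)

lemma rowOf_succ {n : ℕ} (i j : Fin (n + 1) → ℕ) :
    rowOf i j = (i 0, j 0) :: rowOf (fun t => i t.succ) (fun t => j t.succ) := by
  simp [rowOf, List.ofFn_succ]

lemma rowVec_of_isPath (q : ℂ) {n : ℕ} (ε : Fin n → Bool) (a b i j : Fin n → ℕ) {c k : ℕ}
    {y : Fin (n + 1) → ℕ} (h : IsPath b j c k y) :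
    rowVec q (List.ofFn ε) k (rowOf i j) c (rowOf a b) = pathProd q ε a b i j y := by
  induction n generalizing c with
  | zero =>
    have : c = k := by rw [← h.1, ← h.2.1]; rfl
    subst this
    simp [rowOf, rowVec, pathProd]
  | succ n ih =>
    have h0 := h.2.2 0
    rw [Fin.castSucc_zero, h.1] at h0
    have hk : b 0 + c - j 0 = y (Fin.succ 0) := by omega
    rw [List.ofFn_succ, rowOf_succ, rowOf_succ, rowVec, siteOp_apply, pathProd,
      Fin.prod_univ_succ, hk, Fin.castSucc_zero, h.1]
    congr 1
    rw [ih (fun t => ε t.succ) (fun t => a t.succ) (fun t => b t.succ) (fun t => i t.succ)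
      (fun t => j t.succ) (y := fun v => y v.succ)]
    · rfl
    · exact ⟨rfl, h.2.1, fun t => h.2.2 t.succ⟩

lemma exists_isPath {q : ℂ} {n : ℕ} {ε : Fin n → Bool} {a b i j : Fin n → ℕ} {c k : ℕ}
    (h : rowVec q (List.ofFn ε) k (rowOf i j) c (rowOf a b) ≠ 0) : ∃ y, IsPath b j c k y := by
  induction n generalizing c with
  | zero =>
    refine ⟨fun _ => c, rfl, ?_, fun t => t.elim0⟩
    by_contra hc
    simp [rowOf, rowVec, Finsupp.single_eq_of_ne hc] at h
  | succ n ih =>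
    rw [List.ofFn_succ, rowOf_succ, rowOf_succ, rowVec, siteOp_apply] at h
    obtain ⟨y, h1, h2, h3⟩ := ih (right_ne_zero_of_mul h)
    have h4 := (Sg_conserve (left_ne_zero_of_mul h)).2
    refine ⟨Fin.cons c y, rfl, ?_, fun t => ?_⟩
    · rw [← Fin.succ_last, Fin.cons_succ, h2]
    · refine Fin.cases ?_ (fun t => ?_) t
      · rw [Fin.castSucc_zero, Fin.cons_zero, Fin.cons_succ, h1]
        exact h4
      · rw [← Fin.succ_castSucc, Fin.cons_succ, Fin.cons_succ, h3]

/-- The coefficient of `z^{c₀}` in the trace solution. -/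
lemma trCoef_eq (q : ℂ) {n : ℕ} [NeZero n] (ε : Fin n → Bool) (a b i j : Fin n → ℕ) (c0 : ℕ) :
    trCoef q ε a b i j c0 = rowVec q (List.ofFn ε) c0 (rowOf i j) c0 (rowOf a b) := by
  obtain ⟨n, rfl⟩ := Nat.exists_eq_succ_of_ne_zero (NeZero.ne n)
  -- A cyclic sequence of occupation numbers, closed up to a path.
  set cl : (Fin (n + 1) → ℕ) → Fin (n + 2) → ℕ := fun c => Fin.snoc c (c 0) with hcl
  have hcast : ∀ c t, cl c (Fin.castSucc t) = c t := fun c t => by simp [hcl]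
  have hsucc : ∀ c (t : Fin (n + 1)), cl c t.succ = c (t + 1) := by
    intro c t
    refine Fin.lastCases ?_ (fun t => ?_) t
    · rw [Fin.succ_last, Fin.last_add_one]
      simp [hcl]
    · rw [Fin.succ_castSucc, hcast, Fin.coeSucc_eq_succ]
  have hprod : ∀ c, ∏ t, Sg q (ε t) (a t) (b t) (c t) (i t) (j t) (c (t + 1)) =
      pathProd q ε a b i j (cl c) := by
    intro c
    simp only [pathProd, hcast, hsucc]
  have hpath : ∀ c : Fin (n + 1) → ℕ, (if c 0 = c0 then
      ∏ t, Sg q (ε t) (a t) (b t) (c t) (i t) (j t) (c (t + 1)) else 0) ≠ 0 →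
      IsPath b j c0 c0 (cl c) := by
    intro c hc
    have h0 : c 0 = c0 := by
      by_contra h
      exact hc (if_neg h)
    rw [if_pos h0, hprod] at hc
    refine ⟨?_, ?_, fun t => (conserve_of_pathProd_ne hc t).2⟩
    · rw [← Fin.castSucc_zero, hcast, h0]
    · rw [← Fin.succ_last, hsucc, Fin.last_add_one, h0]
  by_cases hex : ∃ y, IsPath b j c0 c0 y
  · obtain ⟨y, hy⟩ := hex
    rw [rowVec_of_isPath q ε a b i j hy, trCoef, finsum_eq_single _ fun t => y t.castSucc]
    · have hcy : cl (fun t => y t.castSucc) = y := by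
        funext v
        refine Fin.lastCases ?_ (fun t => hcast _ t) v
        simp only [hcl, Fin.snoc_last, Fin.castSucc_zero]
        rw [hy.1, hy.2.1]
      rw [if_pos (show y (Fin.castSucc 0) = c0 by rw [Fin.castSucc_zero, hy.1]), hprod, hcy]
    · intro c hc
      by_contra h
      refine hc ?_
      rw [← (hpath c h).unique hy]
      funext t
      rw [hcast]
  · have h0 : rowVec q (List.ofFn ε) c0 (rowOf i j) c0 (rowOf a b) = 0 := by
      by_contra h
      exact hex (exists_isPath h)
    rw [h0, trCoef]
    refine finsum_eq_zero_of_forall_eq_zero fun c => ?_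
    by_contra h
    exact hex ⟨_, hpath c h⟩

/-- The weight of `⟨s c₀| ⋯ |t c_n⟩` in the boundary solution. -/
def bdWt (q : ℂ) (s t c0 cn : ℕ) : ℂ :=
  poch (q ^ 2) (q ^ 2) (s * c0) /
    (poch (q ^ s ^ 2) (q ^ s ^ 2) c0 * poch (q ^ t ^ 2) (q ^ t ^ 2) cn)

/-- The coefficient of `z^{c₀}` in the boundary solution. -/
lemma bdCoefST_eq (q : ℂ) (s : ℕ) {t : ℕ} (ht : t ≠ 0) {n : ℕ} [NeZero n] (ε : Fin n → Bool)
    (a b i j : Fin n → ℕ) (c0 : ℕ) :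
    bdCoefST q s t ε a b i j c0 =
      ∑ᶠ cn, bdWt q s t c0 cn *
        rowVec q (List.ofFn ε) (t * cn) (rowOf i j) (s * c0) (rowOf a b) := by
  have hn : (0 : Fin (n + 1)) ≠ Fin.last n := fun h => NeZero.ne n (by simpa using h.symm)
  set bd : (Fin (n + 1) → ℕ) → Fin (n + 1) → ℕ := fun c v =>
    if v = 0 then s * c0 else if v = Fin.last n then t * c (Fin.last n) else c v with hbd
  have hcast : ∀ c (u : Fin n), bd c u.castSucc =
      if u.castSucc = 0 then s * c0 else c u.castSucc := fun c u => by
    simp [hbd, (Fin.castSucc_lt_last u).ne]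
  have hsucc : ∀ c (u : Fin n), bd c u.succ =
      if u.succ = Fin.last n then t * c (Fin.last n) else c u.succ := fun c u => by
    simp [hbd, Fin.succ_ne_zero]
  have hprod : ∀ c, ∏ u : Fin n, Sg q (ε u) (a u) (b u)
      (if u.castSucc = 0 then s * c0 else c u.castSucc) (i u) (j u)
      (if u.succ = Fin.last n then t * c (Fin.last n) else c u.succ) =
      pathProd q ε a b i j (bd c) := by
    intro c
    simp only [pathProd, hcast, hsucc]
  have hpath : ∀ c : Fin (n + 1) → ℕ, pathProd q ε a b i j (bd c) ≠ 0 →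
      IsPath b j (s * c0) (t * c (Fin.last n)) (bd c) := by
    intro c hc
    refine ⟨by simp [hbd], by simp [hbd, hn.symm], fun t => (conserve_of_pathProd_ne hc t).2⟩
  simp only [bdCoefST, hprod]
  change (∑ᶠ c : Fin (n + 1) → ℕ, if c 0 = c0 then
    bdWt q s t c0 (c (Fin.last n)) * pathProd q ε a b i j (bd c) else 0) = _
  by_cases hex : ∃ cn y, IsPath b j (s * c0) (t * cn) y
  · obtain ⟨cn, y, hy⟩ := hex
    rw [finsum_eq_single _ cn, rowVec_of_isPath q ε a b i j hy,
      finsum_eq_single _ fun v => if v = 0 then c0 else if v = Fin.last n then cn else y v]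
    · have hcy : bd (fun v => if v = 0 then c0 else if v = Fin.last n then cn else y v) = y := by
        funext v
        simp only [hbd, hn.symm, if_false, if_true]
        split_ifs with h1 h2
        · rw [h1, hy.1]
        · rw [h2, hy.2.1]
        · rfl
      rw [hcy]
      simp [hn.symm]
    · intro c hc
      by_contra h
      have h0 : c 0 = c0 := by
        by_contra h'
        exact h (if_neg h')
      rw [if_pos h0] at h
      have hp := hpath c (right_ne_zero_of_mul h)
      have hyc := hp.unique hy
      have hcn : c (Fin.last n) = cn := by
        have := hp.2.1
        rw [hyc, hy.2.1] at this
        exact (Nat.eq_of_mul_eq_mul_left (Nat.pos_of_ne_zero ht) this).symm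
      refine hc (funext fun v => ?_)
      split_ifs with h1 h2
      · rw [h1, h0]
      · rw [h2, hcn]
      · rw [← hyc]
        simp [hbd, h1, h2]
    · intro cn' hne
      by_contra h
      obtain ⟨y', hy'⟩ := exists_isPath (right_ne_zero_of_mul h)
      have := hy'.2.1
      rw [hy'.unique hy, hy.2.1] at this
      exact hne (Nat.eq_of_mul_eq_mul_left (Nat.pos_of_ne_zero ht) this).symm
  · rw [finsum_eq_zero_of_forall_eq_zero, finsum_eq_zero_of_forall_eq_zero]
    · intro cn
      by_contra h
      exact hex ⟨cn, exists_isPath (right_ne_zero_of_mul h)⟩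
    · intro c
      split_ifs
      · by_contra h
        exact hex ⟨_, _, hpath c (right_ne_zero_of_mul h)⟩
      · rfl

/-! ### Passing to formal power series -/

lemma mkS_add (f g : ℕ → ℂ) : mkS (fun c => f c + g c) = mkS f + mkS g := by
  rw [mkS, mkS, mkS, ← map_add]
  rfl

lemma mkS_zero : mkS (fun _ => 0) = 0 := by
  rw [mkS, ← map_zero (HahnSeries.ofPowerSeries ℤ ℂ)]
  rfl

lemma mkS_injective : Function.Injective mkS := by
  intro f g h
  have h' := HahnSeries.ofPowerSeries_injective h
  funext c
  have := congrArg (PowerSeries.coeff c) h'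
  simpa using this

lemma cK_mul_mkS (r : ℂ) (f : ℕ → ℂ) : cK r * mkS f = mkS fun c => r * f c := by
  have h : cK r = HahnSeries.ofPowerSeries ℤ ℂ (PowerSeries.C r) := by
    rw [HahnSeries.ofPowerSeries_C]
    rfl
  rw [h, mkS, mkS, ← map_mul]
  congr 1
  ext c
  simp

lemma sum_mkS {α : Type} (s : Finset α) (f : α → ℕ → ℂ) :
    ∑ x ∈ s, mkS (f x) = mkS fun c => ∑ x ∈ s, f x c := by
  classical
  induction s using Finset.induction_on with
  | empty => simp [mkS_zero]
  | insert x s hx ih =>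
    rw [Finset.sum_insert hx, ih, ← mkS_add]
    congr 1
    funext c
    rw [Finset.sum_insert hx]

/-- The row of labels of a basis vector `|i⟩ ⊗ |j⟩` of `𝒲 ⊗ 𝒲`. -/
def enc {n : ℕ} {ε : Fin n → Bool} (p : Idx ε × Idx ε) : List (ℕ × ℕ) := rowOf p.1.1 p.2.1

lemma rowOf_inj {n : ℕ} {i j i' j' : Fin n → ℕ} (h : rowOf i j = rowOf i' j') :
    i = i' ∧ j = j' := by
  have := List.ofFn_injective h
  constructor <;> funext t
  · exact congrArg Prod.fst (congrFun this t)
  · exact congrArg Prod.snd (congrFun this t)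

section Encode

variable {n : ℕ} {ε : Fin n → Bool}

lemma enc_injective : Function.Injective (enc (ε := ε)) := by
  rintro ⟨⟨i, hi⟩, ⟨j, hj⟩⟩ ⟨⟨i', hi'⟩, ⟨j', hj'⟩⟩ h
  obtain ⟨h1, h2⟩ := rowOf_inj h
  dsimp only at h1 h2
  subst h1 h2
  rfl

lemma okL_enc (p : Idx ε × Idx ε) : OkL (List.ofFn ε) (enc p) := by
  rw [OkL, List.forall₂_iff_get]
  refine ⟨by simp [enc, rowOf], fun t h1 h2 => ?_⟩
  simp only [enc, rowOf, List.get_ofFn]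
  intro h
  exact ⟨p.1.2 _ h, p.2.2 _ h⟩

lemma exists_enc {m : List (ℕ × ℕ)} (h : OkL (List.ofFn ε) m) : ∃ p : Idx ε × Idx ε, enc p = m := by
  rw [OkL, List.forall₂_iff_get] at h
  obtain ⟨h1, h2⟩ := h
  rw [List.length_ofFn] at h1
  subst h1
  have h3 : ∀ t, ε t = true → (m.get t).1 ≤ 1 ∧ (m.get t).2 ≤ 1 := by
    intro t ht
    have := h2 t (by simp) t.2
    simp only [List.get_ofFn] at this
    exact this ht
  refine ⟨⟨⟨fun t => (m.get t).1, fun t ht => (h3 t ht).1⟩,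
    ⟨fun t => (m.get t).2, fun t ht => (h3 t ht).2⟩⟩, ?_⟩
  exact List.ofFn_get m

/-- Extension of scalars from rows obeying the exclusion rule to `𝒲 ⊗ 𝒲`; the other rows are
discarded. -/
def toW (ε : Fin n → Bool) : Row →+ WW K ε :=
  (Finsupp.mapRange.addMonoidHom cK.toAddMonoidHom).comp
    (Finsupp.comapDomain.addMonoidHom enc_injective)

lemma toW_apply (x : Row) (p : Idx ε × Idx ε) : toW ε x p = cK (x (enc p)) := by
  simp [toW]

lemma toW_smul (r : ℂ) (x : Row) : toW ε (r • x) = cK r • toW ε x := by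
  ext1 p
  rw [Finsupp.smul_apply, toW_apply, toW_apply, Finsupp.smul_apply, smul_eq_mul, smul_eq_mul,
    map_mul]

lemma toW_enc (p : Idx ε × Idx ε) : toW ε (Finsupp.single (enc p) 1) = Finsupp.single p 1 := by
  classical
  ext1 p'
  rw [toW_apply, Finsupp.single_apply, Finsupp.single_apply]
  by_cases h : p = p'
  · simp [h]
  · rw [if_neg h, if_neg (enc_injective.ne h), map_zero]

lemma okRows_induction {C : Row → Prop} (hz : C 0) (ha : ∀ x y, C x → C y → C (x + y))
    (hs : ∀ (r : ℂ) x, C x → C (r • x)) (he : ∀ p : Idx ε × Idx ε, C (Finsupp.single (enc p) 1))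
    {x : Row} (hx : x ∈ okRows (List.ofFn ε)) : C x := by
  rw [okRows, Finsupp.supported_eq_span_single] at hx
  induction hx using Submodule.span_induction with
  | mem x hx =>
    obtain ⟨m, hm, rfl⟩ := hx
    obtain ⟨p, rfl⟩ := exists_enc hm
    exact he p
  | zero => exact hz
  | add x y _ _ hx hy => exact ha x y hx hy
  | smul r x _ hx => exact hs r x hx

/-- The operator `S` on `𝒲 ⊗ 𝒲` is the power series in `z` whose coefficients are the operators
`G c` on rows. -/
def IsSeries (S : WW K ε →ₗ[K] WW K ε) (G : ℕ → Row →ₗ[ℂ] Row) : Prop :=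
  ∀ p : Idx ε × Idx ε, (∀ c, G c (Finsupp.single (enc p) 1) ∈ okRows (List.ofFn ε)) ∧
    ∀ p', S (Finsupp.single p 1) p' = mkS fun c => G c (Finsupp.single (enc p) 1) (enc p')

lemma IsSeries.apply_toW {S : WW K ε →ₗ[K] WW K ε} {G : ℕ → Row →ₗ[ℂ] Row} (h : IsSeries S G)
    {x : Row} (hx : x ∈ okRows (List.ofFn ε)) (p' : Idx ε × Idx ε) :
    S (toW ε x) p' = mkS fun c => G c x (enc p') := by
  refine okRows_induction (C := fun x => S (toW ε x) p' = mkS fun c => G c x (enc p'))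
    ?_ ?_ ?_ ?_ hx
  · simp [mkS_zero]
  · intro x y hx hy
    simp only [map_add, Finsupp.add_apply, hx, hy, mkS_add]
  · intro r x hx
    rw [toW_smul, map_smul, Finsupp.smul_apply, hx, smul_eq_mul, cK_mul_mkS]
    simp
  · intro p
    rw [toW_enc, (h p).2]

variable {ε' : Fin n → Bool}

/-- The map `𝒲 ⊗ 𝒲 → 𝒲' ⊗ 𝒲'` induced by an operator on rows. -/
def mapW (ε ε' : Fin n → Bool) (f : Row →ₗ[ℂ] Row) : WW K ε →ₗ[K] WW K ε' :=
  Finsupp.linearCombination K fun p => toW ε' (f (Finsupp.single (enc p) 1))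

lemma mapW_single (f : Row →ₗ[ℂ] Row) (p : Idx ε × Idx ε) :
    mapW ε ε' f (Finsupp.single p 1) = toW ε' (f (Finsupp.single (enc p) 1)) := by
  simp [mapW]

lemma mapW_toW (f : Row →ₗ[ℂ] Row) {x : Row} (hx : x ∈ okRows (List.ofFn ε)) :
    mapW ε ε' f (toW ε x) = toW ε' (f x) := by
  refine okRows_induction (C := fun x => mapW ε ε' f (toW ε x) = toW ε' (f x)) ?_ ?_ ?_ ?_ hx
  · simp
  · intro x y hx hy
    simp only [map_add, hx, hy]
  · intro r x hx
    rw [toW_smul, map_smul, map_smul, toW_smul, hx]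
  · intro p
    rw [toW_enc, mapW_single]

lemma mapW_mapW {f g : Row →ₗ[ℂ] Row} (h : ∀ x, g (f x) = x)
    (hf : ∀ x ∈ okRows (List.ofFn ε), f x ∈ okRows (List.ofFn ε')) (u : WW K ε) :
    mapW ε' ε g (mapW ε ε' f u) = u := by
  refine LinearMap.congr_fun (f := mapW ε' ε g ∘ₗ mapW ε ε' f) (g := LinearMap.id)
    (Finsupp.lhom_ext' fun p => LinearMap.ext_ring ?_) u
  change mapW ε' ε g (mapW ε ε' f (Finsupp.single p 1)) = Finsupp.single p 1
  rw [mapW_single, mapW_toW g (hf _ (single_mem_okRows (okL_enc p) 1)), h, toW_enc]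

/-- An intertwiner of the coefficients of two power series intertwines the series. -/
lemma IsSeries.intertwine {S : WW K ε →ₗ[K] WW K ε} {G : ℕ → Row →ₗ[ℂ] Row} (h : IsSeries S G)
    {S' : WW K ε' →ₗ[K] WW K ε'} {G' : ℕ → Row →ₗ[ℂ] Row} (h' : IsSeries S' G')
    {f : Row →ₗ[ℂ] Row} (hf : ∀ x ∈ okRows (List.ofFn ε), f x ∈ okRows (List.ofFn ε'))
    (hG : ∀ c x, f (G c x) = G' c (f x)) : mapW ε ε' f ∘ₗ S = S' ∘ₗ mapW ε ε' f := by
  refine Finsupp.lhom_ext' fun p => LinearMap.ext_ring (Finsupp.ext fun p'' => ?_)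
  change mapW ε ε' f (S (Finsupp.single p 1)) p'' = S' (mapW ε ε' f (Finsupp.single p 1)) p''
  rw [mapW_single, h'.apply_toW (hf _ (single_mem_okRows (okL_enc p) 1))]
  set u := S (Finsupp.single p 1) with hu
  rw [mapW, Finsupp.linearCombination_apply, Finsupp.sum, Finsupp.coe_finsetSum, Finset.sum_apply]
  have hterm : ∀ p', (u p' • toW ε' (f (Finsupp.single (enc p') 1))) p'' =
      mkS fun c => f (Finsupp.single (enc p') 1) (enc p'') *
        G c (Finsupp.single (enc p) 1) (enc p') := by
    intro p'
    rw [Finsupp.smul_apply, toW_apply, smul_eq_mul, mul_comm, hu, (h p).2, cK_mul_mkS]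
  simp only [hterm, sum_mkS]
  congr 1
  funext c
  rw [← hG]
  -- The support of the series `u` contains the support of each of its coefficients.
  have hsum : G c (Finsupp.single (enc p) 1) =
      ∑ p' ∈ u.support, G c (Finsupp.single (enc p) 1) (enc p') • Finsupp.single (enc p') 1 := by
    ext m
    rw [Finsupp.coe_finsetSum, Finset.sum_apply]
    simp only [Finsupp.smul_apply, smul_eq_mul]
    by_cases hm : G c (Finsupp.single (enc p) 1) m = 0
    · rw [hm]
      refine (Finset.sum_eq_zero fun p' _ => ?_).symm
      by_cases hp : enc p' = m
      · rw [hp, hm, zero_mul]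
      · rw [Finsupp.single_eq_of_ne (Ne.symm hp), mul_zero]
    · have hok : OkL (List.ofFn ε) m :=
        (Finsupp.mem_supported _ _).mp ((h p).1 c) (Finsupp.mem_support_iff.mpr hm)
      obtain ⟨p', rfl⟩ := exists_enc hok
      rw [Finset.sum_eq_single p']
      · simp
      · intro p₁ _ hne
        rw [Finsupp.single_eq_of_ne (enc_injective.ne hne.symm), mul_zero]
      · intro hn
        rw [Finsupp.notMem_support_iff, hu, (h p).2, ← mkS_zero] at hn
        exact absurd (congrFun (mkS_injective hn) c) hm
  conv_rhs => rw [hsum, map_sum, Finsupp.coe_finsetSum, Finset.sum_apply]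
  refine Finset.sum_congr rfl fun p' _ => ?_
  rw [map_smul, Finsupp.smul_apply, smul_eq_mul, mul_comm]

end Encode

lemma kk_apply {n : ℕ} (ε : Fin n → Bool) (a b : Fin n → ℕ) (p : Idx ε × Idx ε) :
    kk K ε (fun t => (a t : ℤ)) (fun t => (b t : ℤ)) p =
      if p.1.1 = a ∧ p.2.1 = b then 1 else 0 := by
  classical
  simp only [kk, Int.toNat_natCast]
  split_ifs with h h' h'
  · have : p = (⟨a, h.1.2⟩, ⟨b, h.2.2⟩) := Prod.ext (Subtype.ext h'.1) (Subtype.ext h'.2)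
    rw [this, Finsupp.single_eq_same]
  · rw [Finsupp.single_eq_of_ne]
    rintro rfl
    exact h' ⟨rfl, rfl⟩
  · exact absurd ⟨⟨fun t => Int.natCast_nonneg _, h'.1 ▸ p.1.2⟩,
      ⟨fun t => Int.natCast_nonneg _, h'.2 ▸ p.2.2⟩⟩ h
  · rfl

/-- Matrix elements of the operators in terms of which the solutions are defined. -/
lemma mkEnd_apply {n : ℕ} (ε : Fin n → Bool) (F : (a b i j : Fin n → ℕ) → ℕ → ℂ)
    (hF : ∀ a b i j c, F a b i j c ≠ 0 → ∀ t, a t + b t = i t + j t) (p p' : Idx ε × Idx ε) :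
    mkEnd K (fun ij : Idx ε × Idx ε =>
      ∑ a ∈ Fintype.piFinset (fun t => Finset.range (ij.1.1 t + ij.2.1 t + 1)),
        mkS (F a (fun t => ij.1.1 t + ij.2.1 t - a t) ij.1.1 ij.2.1) •
          kk K ε (fun t => (a t : ℤ)) (fun t => (ij.1.1 t : ℤ) + (ij.2.1 t : ℤ) - (a t : ℤ)))
      (Finsupp.single p 1) p' = mkS (F p'.1.1 p'.2.1 p.1.1 p.2.1) := by
  classical
  have h1 : ∀ v : Idx ε × Idx ε → WW K ε, mkEnd K v (Finsupp.single p 1) = v p := by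
    intro v
    simp [mkEnd]
  rw [h1, Finsupp.coe_finsetSum, Finset.sum_apply]
  have hterm : ∀ a ∈ Fintype.piFinset (fun t => Finset.range (p.1.1 t + p.2.1 t + 1)),
      (mkS (F a (fun t => p.1.1 t + p.2.1 t - a t) p.1.1 p.2.1) •
        kk K ε (fun t => (a t : ℤ))
          (fun t => (p.1.1 t : ℤ) + (p.2.1 t : ℤ) - (a t : ℤ))) p' =
      if p'.1.1 = a ∧ p'.2.1 = (fun t => p.1.1 t + p.2.1 t - a t) then
        mkS (F p'.1.1 p'.2.1 p.1.1 p.2.1) else 0 := by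
    intro a ha
    have hb : (fun t => (p.1.1 t : ℤ) + (p.2.1 t : ℤ) - (a t : ℤ)) =
        fun t => ((p.1.1 t + p.2.1 t - a t : ℕ) : ℤ) := by
      funext t
      have := Finset.mem_range.mp (Fintype.mem_piFinset.mp ha t)
      omega
    rw [Finsupp.smul_apply, hb, kk_apply, smul_eq_mul]
    split_ifs with h
    · rw [mul_one, h.1, h.2]
    · rw [mul_zero]
  rw [Finset.sum_congr rfl hterm]
  by_cases hc : ∀ t, p'.1.1 t + p'.2.1 t = p.1.1 t + p.2.1 t
  · rw [Finset.sum_eq_single p'.1.1, if_pos]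
    · refine ⟨rfl, funext fun t => ?_⟩
      have := hc t
      omega
    · intro a _ hne
      exact if_neg fun h => hne h.1.symm
    · intro hn
      refine absurd (Fintype.mem_piFinset.mpr fun t => Finset.mem_range.mpr ?_) hn
      have := hc t
      omega
  · have h0 : F p'.1.1 p'.2.1 p.1.1 p.2.1 = fun _ => 0 := by
      funext c
      by_contra h
      exact hc (hF _ _ _ _ c h)
    rw [h0, mkS_zero]
    exact Finset.sum_eq_zero fun a _ => by split_ifs <;> rfl

/-! ### The solutions as series of operators on rows -/

lemma conserve_of_rowVec_ne {q : ℂ} {n : ℕ} {ε : Fin n → Bool} {a b i j : Fin n → ℕ} {c k : ℕ}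
    (h : rowVec q (List.ofFn ε) k (rowOf i j) c (rowOf a b) ≠ 0) (t : Fin n) :
    a t + b t = i t + j t := by
  obtain ⟨y, hy⟩ := exists_isPath h
  rw [rowVec_of_isPath q ε a b i j hy] at h
  exact (conserve_of_pathProd_ne h t).1

/-- The coefficient of `z^c` in the trace solution, as an operator on rows. -/
def trOp (q : ℂ) (l : List Bool) (c : ℕ) : Row →ₗ[ℂ] Row := Finsupp.lapply c ∘ₗ rowOp q l c

lemma isSeries_trOp (q : ℂ) {n : ℕ} [NeZero n] (ε : Fin n → Bool) :
    IsSeries (S0tr q ε) (trOp q (List.ofFn ε)) := by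
  intro p
  have h : ∀ c, trOp q (List.ofFn ε) c (Finsupp.single (enc p) 1) =
      rowVec q (List.ofFn ε) c (enc p) c := fun c => by
    rw [trOp, LinearMap.comp_apply, rowOp_single, Finsupp.lapply_apply]
  refine ⟨fun c => ?_, fun p' => ?_⟩
  · rw [h]
    exact rowVec_mem_okRows _ _ _ _ _
  · refine (mkEnd_apply ε (trCoef q ε) (fun a b i j c hc t => ?_) p p').trans ?_
    · rw [trCoef_eq] at hc
      exact conserve_of_rowVec_ne hc t
    · congr 1
      funext c
      rw [trCoef_eq, h]
      rfl

/-- The coefficient of `z^{c₀}` in the boundary solution, as an operator on rows. -/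
def bdOp (q : ℂ) (s t : ℕ) (l : List Bool) (c0 : ℕ) : Row →ₗ[ℂ] Row :=
  Finsupp.linearCombination ℂ fun m => ∑ᶠ cn, bdWt q s t c0 cn • rowVec q l (t * cn) m (s * c0)

lemma finite_rowOp (q : ℂ) (s : ℕ) {t : ℕ} (ht : t ≠ 0) (l : List Bool) (c0 : ℕ) (x : Row) :
    {cn | rowOp q l (t * cn) x (s * c0) ≠ 0}.Finite := by
  induction x using Finsupp.induction_linear with
  | zero => simp
  | add x y hx hy =>
    refine (hx.union hy).subset fun cn h => ?_
    by_contra hn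
    simp only [Set.mem_union, Set.mem_ofPred_eq, not_or, not_not] at hn
    refine h ?_
    rw [map_add, Finsupp.add_apply, hn.1, hn.2, add_zero]
  | single m r =>
    refine (Set.finite_Iic (s * c0 + (m.map fun p => p.1 + p.2).sum)).subset fun cn h => ?_
    have h' : rowVec q l (t * cn) m (s * c0) ≠ 0 := by
      intro h0
      refine h ?_
      rw [rowOp, Finsupp.linearCombination_single, Finsupp.smul_apply, h0, smul_zero]
    obtain ⟨m', hm'⟩ := Finsupp.ne_iff.mp h'
    exact (Nat.le_mul_of_pos_left cn (Nat.pos_of_ne_zero ht)).trans (le_of_rowVec_ne hm')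

lemma finite_bdWt_rowOp (q : ℂ) (s : ℕ) {t : ℕ} (ht : t ≠ 0) (l : List Bool) (c0 : ℕ) (x : Row) :
    (Function.support fun cn => bdWt q s t c0 cn • rowOp q l (t * cn) x (s * c0)).Finite :=
  (finite_rowOp q s ht l c0 x).subset fun cn h h0 => h (by
    change bdWt q s t c0 cn • rowOp q l (t * cn) x (s * c0) = 0
    rw [h0, smul_zero])

lemma bdOp_apply (q : ℂ) (s : ℕ) {t : ℕ} (ht : t ≠ 0) (l : List Bool) (c0 : ℕ) (x : Row) :
    bdOp q s t l c0 x = ∑ᶠ cn, bdWt q s t c0 cn • rowOp q l (t * cn) x (s * c0) := by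
  induction x using Finsupp.induction_linear with
  | zero => simp
  | add x y hx hy =>
    rw [map_add, hx, hy, ← finsum_add_distrib (finite_bdWt_rowOp q s ht l c0 x)
      (finite_bdWt_rowOp q s ht l c0 y)]
    simp only [map_add, Finsupp.add_apply, smul_add]
  | single m r =>
    have h := finite_bdWt_rowOp q s ht l c0 (Finsupp.single m 1)
    simp only [rowOp_single] at h
    rw [bdOp, Finsupp.linearCombination_single, smul_finsum' r h]
    refine finsum_congr fun cn => ?_
    rw [rowOp, Finsupp.linearCombination_single, Finsupp.smul_apply, smul_comm]

lemma isSeries_bdOp (q : ℂ) (s : ℕ) {t : ℕ} (ht : t ≠ 0) {n : ℕ} [NeZero n] (ε : Fin n → Bool) :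
    IsSeries (S0bdST q s t ε) (bdOp q s t (List.ofFn ε)) := by
  intro p
  have h : ∀ c, bdOp q s t (List.ofFn ε) c (Finsupp.single (enc p) 1) =
      ∑ᶠ cn, bdWt q s t c cn • rowVec q (List.ofFn ε) (t * cn) (enc p) (s * c) := fun c => by
    rw [bdOp_apply q s ht]
    simp only [rowOp_single]
  refine ⟨fun c => ?_, fun p' => ?_⟩
  · rw [h]
    exact finsum_induction (· ∈ okRows (List.ofFn ε)) (Submodule.zero_mem _)
      (fun _ _ hx hy => Submodule.add_mem _ hx hy)
      fun cn => Submodule.smul_mem _ _ (rowVec_mem_okRows _ _ _ _ _)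
  · refine (mkEnd_apply ε (bdCoefST q s t ε) (fun a b i j c hc u => ?_) p p').trans ?_
    · rw [bdCoefST_eq q s ht] at hc
      by_contra hu
      refine hc (finsum_eq_zero_of_forall_eq_zero fun cn => ?_)
      by_contra hcn
      exact hu (conserve_of_rowVec_ne (right_ne_zero_of_mul hcn) u)
    · congr 1
      funext c
      have hfin := finite_bdWt_rowOp q s ht (List.ofFn ε) c (Finsupp.single (enc p) 1)
      simp only [rowOp_single] at hfin
      rw [bdCoefST_eq q s ht, h]
      exact ((Finsupp.lapply (R := ℂ) (M := ℂ) (enc p')).toAddMonoidHom.map_finsum hfin).symm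

section Commute

variable {q : ℂ} {l l' : List Bool} {f : Row →ₗ[ℂ] Row}

lemma trOp_comm (h : ∀ k x, hat f (rowOp q l k x) = rowOp q l' k (f x)) (c : ℕ) (x : Row) :
    f (trOp q l c x) = trOp q l' c (f x) := by
  simp only [trOp, LinearMap.comp_apply, Finsupp.lapply_apply, ← h, hat_apply]

lemma bdOp_comm (h : ∀ k x, hat f (rowOp q l k x) = rowOp q l' k (f x)) (s : ℕ) {t : ℕ}
    (ht : t ≠ 0) (c : ℕ) (x : Row) : f (bdOp q s t l c x) = bdOp q s t l' c (f x) := by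
  rw [bdOp_apply q s ht, bdOp_apply q s ht]
  refine (f.toAddMonoidHom.map_finsum (finite_bdWt_rowOp q s ht l c x)).trans ?_
  refine finsum_congr fun cn => ?_
  rw [← h, hat_apply]
  exact map_smul f _ _

end Commute

/-- equivalence of the solutions under permutations of
`(ε₁,…,ε_n)`. -/
theorem statement_4 (q : ℂ) (hq0 : q ≠ 0) (hq : ∀ k : ℕ, k ≠ 0 → q ^ k ≠ 1)
    (n : ℕ) [NeZero n] (ε ε' : Fin n → Bool)
    (hperm : ∃ σ : Equiv.Perm (Fin n), ∀ t, ε' t = ε (σ t)) :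
    ∃ Φ : WW K ε →ₗ[K] WW K ε',
      Function.Bijective Φ ∧
      (∀ p : Idx ε × Idx ε, ∀ p' : Idx ε' × Idx ε',
        (Φ (Finsupp.single p 1)) p' ∈ Set.range (fun c : ℂ => cK c)) ∧
      Φ ∘ₗ S0tr q ε = S0tr q ε' ∘ₗ Φ ∧
      ∀ s t : ℕ, s ∈ ({1, 2} : Set ℕ) → t ∈ ({1, 2} : Set ℕ) →
        Φ ∘ₗ S0bdST q s t ε = S0bdST q s t ε' ∘ₗ Φ := by
  obtain ⟨σ, hσ⟩ := hperm
  obtain rfl : ε' = ε ∘ σ := funext hσ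
  obtain ⟨f, g, hgf, hfg, hrow, hf, hg⟩ :=
    RowEquiv.of_perm hq0 hq (Equiv.Perm.ofFn_comp_perm σ ε).symm
  refine ⟨mapW ε (ε ∘ σ) f, Function.bijective_iff_has_inverse.mpr
    ⟨mapW (ε ∘ σ) ε g, mapW_mapW hgf hf, mapW_mapW hfg hg⟩, fun p p' => ?_, ?_, fun s t _ ht => ?_⟩
  · rw [mapW_single, toW_apply]
    exact ⟨_, rfl⟩
  · exact (isSeries_trOp q ε).intertwine (isSeries_trOp q _) hf (trOp_comm hrow)
  · have ht0 : t ≠ 0 := by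
      rintro rfl
      simp at ht
    exact (isSeries_bdOp q s ht0 ε).intertwine (isSeries_bdOp q s ht0 _) hf (bdOp_comm hrow s ht0)

end TetraGQ
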